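/- Let T be a set of transpositions of Sym(n) (n ≥ 4) whose transposition graph G(T) is unicyclic and triangle-free, and let UG_n = Cay(Sym(n), T). Then the cyclic connectivity of UG_n equals 4n − 8: the minimum size of a vertex set F such that UG_n − F is disconnected with at least two components containing cycles is exactly 4n − 8. -/

import Mathlib

/-- Cayley graph of `Sym(n)` with connection set `T`. -/
def cayley {n : ℕ} (T : Set (Equiv.Perm (Fin n))) : SimpleGraph (Equiv.Perm (Fin n)) :=
  SimpleGraph.fromRel fun g h => g⁻¹ * h ∈ T

/-- Transposition generating graph `G(T)` on `{1,…,n}`. -/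
def transGraph {n : ℕ} (T : Set (Equiv.Perm (Fin n))) : SimpleGraph (Fin n) :=
  SimpleGraph.fromRel fun i j => Equiv.swap i j ∈ T

/-- `T` is a set of transpositions. -/
def IsTranspositionSet {n : ℕ} (T : Set (Equiv.Perm (Fin n))) : Prop :=
  ∀ t ∈ T, ∃ i j : Fin n, i ≠ j ∧ t = Equiv.swap i j

/-- A unicyclic graph: connected with exactly one cycle, equivalently
connected with as many edges as vertices. -/
def IsUnicyclic {V : Type*} [Fintype V] (G : SimpleGraph V) : Prop :=
  G.Connected ∧ G.edgeSet.ncard = Fintype.card V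
/-- `F` is a cyclic vertex cut of `G`: `G - F` is disconnected and at least two of
its connected components contain a cycle. -/
def CyclicCut {V : Type*} (G : SimpleGraph V) (F : Set V) : Prop :=
  ¬ (G.induce Fᶜ).Preconnected ∧
    ∃ C₁ C₂ : (G.induce Fᶜ).ConnectedComponent, C₁ ≠ C₂ ∧
      (∃ v, (G.induce Fᶜ).connectedComponentMk v = C₁ ∧
        ∃ p : (G.induce Fᶜ).Walk v v, p.IsCycle) ∧
      (∃ v, (G.induce Fᶜ).connectedComponentMk v = C₂ ∧
        ∃ p : (G.induce Fᶜ).Walk v v, p.IsCycle)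


namespace UG
open Equiv Finset
set_option linter.unusedSectionVars false
set_option linter.unusedVariables false
variable {V : Type*} [Fintype V] [DecidableEq V] (G : SimpleGraph V) [DecidableRel G.Adj]

/-- transpositions along the edges inside `X` -/
def ES (X : Finset V) : Finset (Perm V) :=
  univ.filter fun t => ∃ a ∈ X, ∃ b ∈ X, G.Adj a b ∧ t = swap a b

/-- outer neighbourhood of `R` -/
def nb (X : Finset V) (R : Finset (Perm V)) : Finset (Perm V) :=
  (R.biUnion fun r => (ES G X).image fun t => r * t) \ R

variable {G}

theorem mem_ES {X : Finset V} {t : Perm V} :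
    t ∈ ES G X ↔ ∃ a ∈ X, ∃ b ∈ X, G.Adj a b ∧ t = swap a b := by simp [ES]

theorem mem_nb {X : Finset V} {R : Finset (Perm V)} {h : Perm V} :
    h ∈ nb G X R ↔ (∃ r ∈ R, ∃ t ∈ ES G X, h = r * t) ∧ h ∉ R := by
  simp only [nb, mem_sdiff, mem_biUnion, mem_image]
  constructor
  · rintro ⟨⟨r, hr, t, ht, rfl⟩, h2⟩; exact ⟨⟨r, hr, t, ht, rfl⟩, h2⟩
  · rintro ⟨⟨r, hr, t, ht, rfl⟩, h2⟩; exact ⟨⟨r, hr, t, ht, rfl⟩, h2⟩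

theorem ES_sq {X : Finset V} {t : Perm V} (ht : t ∈ ES G X) : t * t = 1 := by
  obtain ⟨a, _, b, _, _, rfl⟩ := mem_ES.1 ht
  exact swap_mul_self a b

theorem ES_sign {X : Finset V} {t : Perm V} (ht : t ∈ ES G X) : Perm.sign t = -1 := by
  obtain ⟨a, _, b, _, hab, rfl⟩ := mem_ES.1 ht
  exact Perm.sign_swap hab.ne

theorem ES_fix {X : Finset V} {t : Perm V} (ht : t ∈ ES G X) {k : V} (hk : k ∉ X) : t k = k := by
  obtain ⟨a, ha, b, hb, hab, rfl⟩ := mem_ES.1 ht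
  exact swap_apply_of_ne_of_ne (fun h => hk (h ▸ ha)) (fun h => hk (h ▸ hb))

theorem ES_mono {X Y : Finset V} (h : X ⊆ Y) : ES G X ⊆ ES G Y := by
  intro t ht
  obtain ⟨a, ha, b, hb, hab, rfl⟩ := mem_ES.1 ht
  exact mem_ES.2 ⟨a, h ha, b, h hb, hab, rfl⟩

theorem nb_mono {X Y : Finset V} (h : X ⊆ Y) (R : Finset (Perm V)) : nb G X R ⊆ nb G Y R := by
  intro x hx
  obtain ⟨⟨r, hr, t, ht, rfl⟩, h2⟩ := mem_nb.1 hx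
  exact mem_nb.2 ⟨⟨r, hr, t, ES_mono h ht, rfl⟩, h2⟩

variable (G)
/-- the local isoperimetric inequality -/
def Loc (X : Finset V) (d : ℕ) : Prop :=
  ∀ R : Finset (Perm V), R.Nonempty →
    2 * R.card * d + 2 ≤ 2 * (nb G X R).card + R.card * (R.card + 1)

inductive TreeX : Finset V → Prop
  | single (v : V) : TreeX {v}
  | leaf {X : Finset V} {k i : V} : TreeX X → k ∉ X → i ∈ X → G.Adj k i →
      (∀ j ∈ X, G.Adj k j → j = i) → TreeX (insert k X)

inductive UniX : Finset V → Prop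
  | cyc {X : Finset V} {k i i' : V} : TreeX G X → k ∉ X → i ∈ X → i' ∈ X → i ≠ i' →
      G.Adj k i → G.Adj k i' →
      (∀ j ∈ X, G.Adj k j → j = i ∨ j = i') → UniX (insert k X)
  | leaf {X : Finset V} {k i : V} : UniX X → k ∉ X → i ∈ X → G.Adj k i →
      (∀ j ∈ X, G.Adj k j → j = i) → UniX (insert k X)
variable {G}

theorem ES_leaf {X : Finset V} {k i : V} (hi : i ∈ X) (hki : G.Adj k i)
    (hu : ∀ j ∈ X, G.Adj k j → j = i) :
    ES G (insert k X) = insert (swap k i) (ES G X) := by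
  ext t
  simp only [mem_insert, mem_ES]
  constructor
  · rintro ⟨a, ha, b, hb, hab, rfl⟩
    rcases ha with rfl | ha <;> rcases hb with rfl | hb
    · exact absurd hab (G.loopless.irrefl _)
    · left; rw [hu b hb hab]
    · left; rw [hu a ha hab.symm, swap_comm]
    · right; exact ⟨a, ha, b, hb, hab, rfl⟩
  · rintro (rfl | ⟨a, ha, b, hb, hab, rfl⟩)
    · exact ⟨k, Or.inl rfl, i, Or.inr hi, hki, rfl⟩
    · exact ⟨a, Or.inr ha, b, Or.inr hb, hab, rfl⟩

theorem ES_two {X : Finset V} {k i i' : V} (hi : i ∈ X) (hi' : i' ∈ X) (hki : G.Adj k i)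
    (hki' : G.Adj k i') (hu : ∀ j ∈ X, G.Adj k j → j = i ∨ j = i') :
    ES G (insert k X) = insert (swap k i) (insert (swap k i') (ES G X)) := by
  ext t
  simp only [mem_insert, mem_ES]
  constructor
  · rintro ⟨a, ha, b, hb, hab, rfl⟩
    rcases ha with rfl | ha <;> rcases hb with rfl | hb
    · exact absurd hab (G.loopless.irrefl _)
    · rcases hu b hb hab with rfl | rfl <;> simp
    · rcases hu a ha hab.symm with rfl | rfl <;> simp [swap_comm]
    · right; right; exact ⟨a, ha, b, hb, hab, rfl⟩
  · rintro (rfl | rfl | ⟨a, ha, b, hb, hab, rfl⟩)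
    · exact ⟨k, Or.inl rfl, i, Or.inr hi, hki, rfl⟩
    · exact ⟨k, Or.inl rfl, i', Or.inr hi', hki', rfl⟩
    · exact ⟨a, Or.inr ha, b, Or.inr hb, hab, rfl⟩

theorem swap_notMem_ES {X : Finset V} {k i : V} (hk : k ∉ X) (hne : k ≠ i) : swap k i ∉ ES G X := by
  intro h
  have := ES_fix h hk
  rw [swap_apply_left] at this
  exact hne this.symm

theorem TreeX.card {X : Finset V} (h : TreeX G X) : (ES G X).card + 1 = X.card := by
  induction h with
  | single v =>
    have : ES G {v} = ∅ := by
      ext t; simp [mem_ES]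
    simp [this]
  | leaf hT hk hi hki hu ih =>
    rw [ES_leaf hi hki hu, card_insert_of_notMem (swap_notMem_ES hk hki.ne), card_insert_of_notMem hk, ih]

theorem UniX.card {X : Finset V} (h : UniX G X) : (ES G X).card = X.card := by
  induction h with
  | @cyc X k i i' hT hk hi hi' hne hki hki' hu =>
    rw [ES_two hi hi' hki hki' hu, card_insert_of_notMem, card_insert_of_notMem (swap_notMem_ES hk hki'.ne),
      hT.card, card_insert_of_notMem hk]
    rw [mem_insert, not_or]
    refine ⟨fun h => hne ?_, swap_notMem_ES hk hki.ne⟩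
    have := congrArg (fun p : Perm V => p k) h
    simpa using this
  | leaf hT hk hi hki hu ih =>
    rw [ES_leaf hi hki hu, card_insert_of_notMem (swap_notMem_ES hk hki.ne), card_insert_of_notMem hk, ih]

/-! ### classes according to the value at `k` -/

theorem nb_filter {X : Finset V} {k : V} (hk : k ∉ X) (R : Finset (Perm V)) (j : V) :
    (nb G X R).filter (fun h => h k = j) = nb G X (R.filter fun h => h k = j) := by
  ext h
  simp only [mem_filter, mem_nb]
  constructor
  · rintro ⟨⟨⟨r, hr, t, ht, rfl⟩, h2⟩, h3⟩
    refine ⟨⟨r, ⟨hr, ?_⟩, t, ht, rfl⟩, fun h => h2 h.1⟩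
    rw [Perm.mul_apply, ES_fix ht hk] at h3; exact h3
  · rintro ⟨⟨r, ⟨hr, h3⟩, t, ht, rfl⟩, h2⟩
    have h4 : (r * t) k = j := by rw [Perm.mul_apply, ES_fix ht hk]; exact h3
    exact ⟨⟨⟨r, hr, t, ht, rfl⟩, fun h => h2 ⟨h, h4⟩⟩, h4⟩

theorem card_nb_eq {X : Finset V} {k : V} (hk : k ∉ X) (R : Finset (Perm V)) :
    (nb G X R).card = ∑ j ∈ R.image (fun h => h k), (nb G X (R.filter fun h => h k = j)).card := by
  rw [card_eq_sum_card_fiberwise (f := fun h : Perm V => h k) (t := R.image (fun h => h k))]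
  · exact sum_congr rfl fun j _ => by rw [nb_filter hk]
  · intro h hh
    obtain ⟨⟨r, hr, t, ht, rfl⟩, -⟩ := mem_nb.1 hh
    simp only [coe_image, Set.mem_image, mem_coe]
    exact ⟨r, hr, by rw [Perm.mul_apply, ES_fix ht hk]⟩

theorem card_eq_cls (R : Finset (Perm V)) (k : V) :
    R.card = ∑ j ∈ R.image (fun h => h k), (R.filter fun h => h k = j).card :=
  card_eq_sum_card_image _ _

theorem cls_pos {R : Finset (Perm V)} {k j : V} (hj : j ∈ R.image (fun h => h k)) :
    1 ≤ (R.filter fun h => h k = j).card := by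
  obtain ⟨r, hr, rfl⟩ := mem_image.1 hj
  exact card_pos.2 ⟨r, by simp [hr]⟩

theorem sum_sq_le {ι : Type*} [DecidableEq ι] (J : Finset ι) (f : ι → ℤ) (hf : ∀ j ∈ J, 1 ≤ f j) :
    ∑ j ∈ J, f j ^ 2 + ((J.card : ℤ) - 1) * (2 * ∑ j ∈ J, f j - J.card) ≤ (∑ j ∈ J, f j) ^ 2 := by
  set m := ∑ j ∈ J, f j with hm
  set c : ℤ := ((J.card : ℕ) : ℤ) with hc
  have key : ∀ j ∈ J, f j ^ 2 ≤ (m - c + 2) * f j - (m - c + 1) := by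
    intro j hj
    have h1 : f j + (c - 1) ≤ m := by
      rw [hm, ← add_sum_erase J f hj]
      have : ((J.erase j).card : ℤ) ≤ ∑ x ∈ J.erase j, f x := by
        rw [card_eq_sum_ones]; push_cast
        exact sum_le_sum fun x hx => hf x (mem_of_mem_erase hx)
      have h2 : ((J.erase j).card : ℤ) = c - 1 := by
        have := card_erase_add_one hj
        rw [hc, ← this]; push_cast; ring
      linarith
    nlinarith [hf j hj]
  have := sum_le_sum key
  rw [sum_sub_distrib, ← mul_sum, sum_const, nsmul_eq_mul, ← hm, ← hc] at this
  nlinarith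

/-- summing the local inequality over classes -/
theorem Loc.sum {X : Finset V} {d : ℕ} (hL : Loc G X d) {k : V} (hk : k ∉ X) (R : Finset (Perm V)) :
    2 * (R.card : ℤ) * d + 2 * (R.image (fun h => h k)).card ≤
      2 * (nb G X R).card + ∑ j ∈ R.image (fun h => h k), ((R.filter fun h => h k = j).card : ℤ) ^ 2 + R.card := by
  have : ∀ j ∈ R.image (fun h => h k), 2 * ((R.filter fun h => h k = j).card : ℤ) * d + 2 ≤
      2 * ((nb G X (R.filter fun h => h k = j)).card : ℤ) + ((R.filter fun h => h k = j).card : ℤ) ^ 2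
       + ((R.filter fun h => h k = j).card : ℤ) := by
    intro j hj
    have := hL (R.filter fun h => h k = j) (card_pos.1 (cls_pos hj))
    zify at this
    nlinarith
  have h2 := sum_le_sum this
  simp only [sum_add_distrib, ← mul_sum, ← sum_mul, sum_const, nsmul_eq_mul] at h2
  have e1 : (∑ j ∈ R.image (fun h => h k), ((R.filter fun h => h k = j).card : ℤ)) = R.card := by
    rw [card_eq_cls R k]; push_cast; rfl
  have e2 : (∑ j ∈ R.image (fun h => h k), ((nb G X (R.filter fun h => h k = j)).card : ℤ)) = (nb G X R).card := by
    rw [card_nb_eq hk R]; push_cast; rfl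
  rw [e1, e2] at h2
  linarith

theorem ext_notMem {R : Finset (Perm V)} {k i : V} (hne : k ≠ i)
    (h1 : (R.image (fun h => h k)).card = 1) {r : Perm V} (hr : r ∈ R) {x : Perm V}
    (hx : x k = r i) : x ∉ R := by
  intro hxR
  rw [card_eq_one] at h1
  obtain ⟨a, ha⟩ := h1
  have A : r k = a := by
    have : r k ∈ R.image (fun h => h k) := mem_image_of_mem _ hr
    rwa [ha, mem_singleton] at this
  have B : x k = a := by
    have : x k ∈ R.image (fun h => h k) := mem_image_of_mem (fun h : Perm V => h k) hxR
    rwa [ha, mem_singleton] at this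
  rw [hx, ← A] at B
  exact hne (r.injective B).symm

theorem nb_val {X : Finset V} {k : V} (hk : k ∉ X) {R : Finset (Perm V)} {x : Perm V} (hx : x ∈ nb G X R) :
    ∃ r ∈ R, x k = r k ∧ ∃ t ∈ ES G X, x = r * t := by
  obtain ⟨⟨r, hr, t, ht, rfl⟩, -⟩ := mem_nb.1 hx
  exact ⟨r, hr, by rw [Perm.mul_apply, ES_fix ht hk], t, ht, rfl⟩

theorem Loc.leaf {X : Finset V} {d : ℕ} (hL : Loc G X d) {k i : V} (hk : k ∉ X) (hi : i ∈ X)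
    (hki : G.Adj k i) (hu : ∀ j ∈ X, G.Adj k j → j = i) : Loc G (insert k X) (d + 1) := by
  intro R hR
  have hsub : nb G X R ⊆ nb G (insert k X) R := nb_mono (subset_insert _ _) R
  have hcpos : 1 ≤ (R.image (fun h => h k)).card := card_pos.2 (hR.image _)
  have hs : swap k i ∈ ES G (insert k X) := by rw [ES_leaf hi hki hu]; exact mem_insert_self _ _
  rcases hcpos.eq_or_lt with h1 | h1
  · have hdisj : Disjoint (nb G X R) (R.image (fun r => r * swap k i)) := by
      rw [disjoint_left]
      intro x hx hx2
      obtain ⟨r, hr, rfl⟩ := mem_image.1 hx2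
      obtain ⟨r', hr', e, -⟩ := nb_val hk hx
      exact ext_notMem hki.ne h1.symm hr (x := r') (by rw [← e]; simp) hr'
    have hsub2 : nb G X R ∪ R.image (fun r => r * swap k i) ⊆ nb G (insert k X) R := by
      refine union_subset hsub ?_
      intro x hx
      obtain ⟨r, hr, rfl⟩ := mem_image.1 hx
      exact mem_nb.2 ⟨⟨r, hr, _, hs, rfl⟩, ext_notMem hki.ne h1.symm hr (by simp)⟩
    have := card_le_card hsub2
    rw [card_union_of_disjoint hdisj, card_image_of_injective _ (mul_left_injective _)] at this
    have := hL R hR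
    nlinarith
  · have h2 := hL.sum hk R
    have h3 := sum_sq_le (R.image (fun h => h k)) (fun j => ((R.filter fun h => h k = j).card : ℤ))
      (fun j hj => by exact_mod_cast cls_pos hj)
    have e1 : (∑ j ∈ R.image (fun h => h k), ((R.filter fun h => h k = j).card : ℤ)) = R.card := by
      rw [card_eq_cls R k]; push_cast; rfl
    rw [e1] at h3
    have hmc : (R.image (fun h => h k)).card ≤ R.card := card_image_le
    have h4 := card_le_card hsub
    zify at *
    set c : ℤ := ((R.image (fun h => h k)).card : ℤ)
    set m : ℤ := (R.card : ℤ)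
    nlinarith [mul_nonneg (sub_nonneg.2 hmc) (show (0:ℤ) ≤ c - 2 by linarith), mul_nonneg (show (0:ℤ) ≤ c - 2 by linarith) (show (0:ℤ) ≤ c + 1 by linarith)]

theorem TreeX.loc {X : Finset V} (h : TreeX G X) : Loc G X (X.card - 1) := by
  induction h with
  | single v =>
    intro R hR
    have : 1 ≤ R.card := card_pos.2 hR
    simp only [card_singleton, Nat.sub_self, mul_zero]
    nlinarith
  | @leaf X k i hT hk hi hki hu ih =>
    have := ih.leaf hk hi hki hu
    have h1 : 1 ≤ X.card := card_pos.2 ⟨i, hi⟩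
    rw [card_insert_of_notMem hk]
    rwa [Nat.sub_add_cancel h1] at this

end UG

namespace UG
open Equiv Finset
set_option linter.unusedSectionVars false
set_option linter.unusedVariables false
variable {V : Type*} [Fintype V] [DecidableEq V] {G : SimpleGraph V} [DecidableRel G.Adj]

/-- triangle-freeness -/
def Tri (G : SimpleGraph V) : Prop := ∀ a b c, G.Adj a b → G.Adj b c → ¬ G.Adj a c

theorem swap_eq_of_apply {p q e f : V} (hef : e ≠ f) (h : swap p q e = f) : swap p q = swap e f := by
  by_cases hp : e = p
  · subst hp; rw [swap_apply_left] at h; rw [h]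
  · by_cases hq : e = q
    · subst hq; rw [swap_apply_right] at h; rw [h, swap_comm]
    · rw [swap_apply_of_ne_of_ne hp hq] at h; exact absurd h hef

theorem moved_left {g : Perm V} {e f p q : V} (hef : e ≠ f) (h : g = swap e f * swap p q)
    (hg : g ≠ 1) : g e ≠ e := by
  intro h1
  have h2 : swap e f * g = swap p q := by rw [h, ← mul_assoc, swap_mul_self, one_mul]
  have h3 : swap p q e = f := by rw [← h2, Perm.mul_apply, h1, swap_apply_left]
  rw [swap_eq_of_apply hef h3, swap_mul_self] at h
  exact hg h

theorem moved_right {g : Perm V} {e f p q : V} (hef : e ≠ f) (h : g = swap e f * swap p q)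
    (hg : g ≠ 1) : g f ≠ f := by
  rw [swap_comm] at h
  exact moved_left hef.symm h hg

theorem L1 {a b c d e f p q : V} (hab : a ≠ b) (hcd : c ≠ d) (hac : a ≠ c) (had : a ≠ d) (hbc : b ≠ c)
    (hbd : b ≠ d) (hef : e ≠ f) (h : swap a b * swap c d = swap e f * swap p q) :
    swap e f = swap a b ∨ swap e f = swap c d := by
  have hg : swap a b * swap c d ≠ 1 := by
    intro h
    have := congrArg (fun g : Perm V => g a) h
    simp [swap_apply_of_ne_of_ne hac had] at this
    exact hab this.symm
  have m1 := moved_left hef h hg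
  have m2 := moved_right hef h hg
  have key : ∀ z, (swap a b * swap c d) z ≠ z → z = a ∨ z = b ∨ z = c ∨ z = d := by
    intro z hz
    by_contra hcon
    push Not at hcon
    apply hz
    rw [Perm.mul_apply, swap_apply_of_ne_of_ne hcon.2.2.1 hcon.2.2.2, swap_apply_of_ne_of_ne hcon.1 hcon.2.1]
  have ea : (swap a b * swap c d) a = b := by simp [swap_apply_of_ne_of_ne hac had]
  have eb : (swap a b * swap c d) b = a := by simp [swap_apply_of_ne_of_ne hbc hbd]
  have ec : (swap a b * swap c d) c = d := by simp [swap_apply_of_ne_of_ne had.symm hbd.symm]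
  have ed : (swap a b * swap c d) d = c := by simp [swap_apply_of_ne_of_ne hac.symm hbc.symm]
  have h2 : swap e f * (swap a b * swap c d) = swap p q := by
    rw [h, ← mul_assoc, swap_mul_self, one_mul]
  have h3 : ∀ z, swap e f ((swap a b * swap c d) (swap e f ((swap a b * swap c d) z))) = z := by
    intro z
    rw [← Perm.mul_apply, ← Perm.mul_apply, h2, ← Perm.mul_apply, mul_assoc, h2, swap_mul_self, Perm.one_apply]
  have h4 := h3 a
  have h5 := h3 b
  rw [ea] at h4
  rw [eb] at h5
  have := hab.symm
  have := hcd.symm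
  have := hac.symm
  have := had.symm
  have := hbc.symm
  have := hbd.symm
  generalize swap a b * swap c d = g at *
  rcases key e m1 with rfl | rfl | rfl | rfl <;>
  rcases key f m2 with rfl | rfl | rfl | rfl <;>
  first
  | exact absurd rfl hef
  | exact Or.inl rfl
  | exact Or.inr rfl
  | exact Or.inl (swap_comm _ _)
  | exact Or.inr (swap_comm _ _)
  | (exfalso; simp_all [swap_apply_of_ne_of_ne])

/-- `g` is a product of two disjoint edges of `X` -/
structure DD (G : SimpleGraph V) (X : Finset V) (g : Perm V) : Prop where
  sq : g * g = 1
  mv : ∀ z, g z ≠ z → z ∈ X ∧ G.Adj z (g z)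
  card : (univ.filter fun z => g z ≠ z).card = 4

theorem dd_mk {X : Finset V} {a b c d : V} (ha : a ∈ X) (hb : b ∈ X) (hc : c ∈ X) (hd : d ∈ X)
    (hab : G.Adj a b) (hcd : G.Adj c d) (hac : a ≠ c) (had : a ≠ d) (hbc : b ≠ c)
    (hbd : b ≠ d) : DD G X (swap a b * swap c d) := by
  have hab' := hab.ne
  have hcd' := hcd.ne
  have ea : (swap a b * swap c d) a = b := by simp [swap_apply_of_ne_of_ne hac had]
  have eb : (swap a b * swap c d) b = a := by simp [swap_apply_of_ne_of_ne hbc hbd]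
  have ec : (swap a b * swap c d) c = d := by simp [swap_apply_of_ne_of_ne had.symm hbd.symm]
  have ed : (swap a b * swap c d) d = c := by simp [swap_apply_of_ne_of_ne hac.symm hbc.symm]
  have key : ∀ z, (swap a b * swap c d) z ≠ z → z = a ∨ z = b ∨ z = c ∨ z = d := by
    intro z hz
    by_contra hcon
    push Not at hcon
    apply hz
    rw [Perm.mul_apply, swap_apply_of_ne_of_ne hcon.2.2.1 hcon.2.2.2, swap_apply_of_ne_of_ne hcon.1 hcon.2.1]
  refine ⟨?_, ?_, ?_⟩
  · ext z
    rw [Perm.mul_apply, Perm.one_apply]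
    by_cases hz : (swap a b * swap c d) z = z
    · rw [hz, hz]
    · rcases key z hz with rfl | rfl | rfl | rfl
      · rw [ea, eb]
      · rw [eb, ea]
      · rw [ec, ed]
      · rw [ed, ec]
  · intro z hz
    rcases key z hz with rfl | rfl | rfl | rfl
    · rw [ea]; exact ⟨ha, hab⟩
    · rw [eb]; exact ⟨hb, hab.symm⟩
    · rw [ec]; exact ⟨hc, hcd⟩
    · rw [ed]; exact ⟨hd, hcd.symm⟩
  · have : (univ.filter fun z => (swap a b * swap c d) z ≠ z) = {a, b, c, d} := by
      ext z
      simp only [mem_filter, mem_univ, true_and, mem_insert, mem_singleton]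
      refine ⟨key z, ?_⟩
      rintro (rfl | rfl | rfl | rfl)
      · rw [ea]; exact hab'.symm
      · rw [eb]; exact hab'
      · rw [ec]; exact hcd'.symm
      · rw [ed]; exact hcd'
    rw [this]
    rw [card_insert_of_notMem, card_insert_of_notMem, card_insert_of_notMem, card_singleton] <;>
      simp_all

theorem dd_tri {X : Finset V} (hX : X.card ≤ 5) (htri : Tri G) {g h : Perm V} (hg : DD G X g) (hh : DD G X h)
    (hgh : DD G X (g * h)) : False := by
  have hsub : ∀ g, DD G X g → (univ.filter fun z => g z ≠ z) ⊆ X := by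
    intro g hg z hz
    exact (hg.mv z (mem_filter.1 hz).2).1
  have c1 := hg.card
  have c2 := hh.card
  have c3 := hgh.card
  have s1 := hsub _ hg
  have s2 := hsub _ hh
  have s3 := hsub _ hgh
  set A := (univ.filter fun z => g z ≠ z)
  set B := (univ.filter fun z => h z ≠ z)
  set C := (univ.filter fun z => (g * h) z ≠ z)
  have i1 := card_union_add_card_inter A B
  have i2 := card_union_add_card_inter (A ∩ B) C
  have u1 : (A ∪ B).card ≤ 5 := (card_le_card (union_subset s1 s2)).trans hX
  have u2 : (A ∩ B ∪ C).card ≤ 5 := (card_le_card (union_subset (inter_subset_left.trans s1) s3)).trans hX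
  have : 0 < (A ∩ B ∩ C).card := by omega
  obtain ⟨a, ha⟩ := card_pos.1 this
  simp only [A, B, C, mem_inter, mem_filter, mem_univ, true_and] at ha
  obtain ⟨⟨ha1, ha2⟩, ha3⟩ := ha
  have comm : h * g = g * h := by
    have e1 := hg.sq
    have e2 := hh.sq
    have e3 := hgh.sq
    calc h * g = 1 * h * g * 1 := by group
      _ = (g * h * (g * h)) * h * g * 1 := by rw [e3]
      _ = g * h * g * (h * h) * g := by group
      _ = g * h * (g * g) := by rw [e2]; group
      _ = g * h := by rw [e1, mul_one]
  have hne : h (g a) ≠ g a := by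
    rw [← Perm.mul_apply, comm, Perm.mul_apply]
    exact fun h => ha2 (g.injective h)
  have A1 := (hg.mv a ha1).2
  have A2 := (hh.mv _ hne).2
  have A3 := (hgh.mv a ha3).2
  rw [← Perm.mul_apply, comm] at A2
  exact htri _ _ _ A1 A2 A3

theorem com {X : Finset V} (htri : Tri G) {r r' s s' : Perm V} (hr : r ∈ ES G X) (hr' : r' ∈ ES G X)
    (hs : s ∈ ES G X) (hs' : s' ∈ ES G X) (h : r * r' = s * s') (hne : r ≠ r') (hrs : r ≠ s) :
    s = r' ∧ DD G X (r * r') ∧ (∀ e f p q, e ≠ f → r * r' = swap e f * swap p q → swap e f ∈ ES G X) := by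
  have hes := hs
  have her := hr
  have her' := hr'
  obtain ⟨a, ha, b, hb, hab, rfl⟩ := mem_ES.1 hr
  obtain ⟨c, hc, d, hd, hcd, rfl⟩ := mem_ES.1 hr'
  obtain ⟨e, he, f, hf, hef, rfl⟩ := mem_ES.1 hs
  obtain ⟨p, hp, q, hq, hpq, rfl⟩ := mem_ES.1 hs'
  have share : ∀ a b d, G.Adj a b → G.Adj a d → swap a b ≠ swap a d → 
      swap a b * swap a d = swap e f * swap p q → swap a b ≠ swap e f → s(e, f) = s(a, d) := by
    intro a b d hab had hne h hrs
    have hg : swap a b * swap a d ≠ 1 := by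
      intro h1
      apply hne
      calc swap a b = swap a b * (swap a d * swap a d) := by rw [swap_mul_self, mul_one]
        _ = swap a d := by rw [← mul_assoc, h1, one_mul]
    have m1 := moved_left hef.ne h hg
    have m2 := moved_right hef.ne h hg
    have key : ∀ z, (swap a b * swap a d) z ≠ z → z = a ∨ z = b ∨ z = d := by
      intro z hz
      by_contra hcon
      push Not at hcon
      apply hz
      rw [Perm.mul_apply, swap_apply_of_ne_of_ne hcon.1 hcon.2.2, swap_apply_of_ne_of_ne hcon.1 hcon.2.1]
    have T := htri b a d hab.symm had
    rcases key e m1 with h1 | h1 | h1 <;> rcases key f m2 with h2 | h2 | h2 <;> rw [h1, h2] at hef hrs <;> rw [h1, h2]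
    · exact absurd hef (G.loopless.irrefl _)
    · exact absurd rfl hrs
    · exact absurd (swap_comm _ _) hrs
    · exact absurd hef (G.loopless.irrefl _)
    · exact absurd hef T
    · exact Sym2.eq_swap
    · exact absurd hef.symm T
    · exact absurd hef (G.loopless.irrefl _)
  have sh : ∀ a b d, a ∈ X → b ∈ X → d ∈ X → G.Adj a b → G.Adj a d → swap a b ≠ swap a d → 
      swap a b * swap a d = swap e f * swap p q → swap a b ≠ swap e f → False := by
    intro a b d ha hb hd hab had hne h hrs
    have h1 := share a b d hab had hne h hrs
    have h2 : swap e f = swap a d := by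
      rcases Sym2.eq_iff.1 h1 with ⟨rfl, rfl⟩ | ⟨rfl, rfl⟩
      · rfl
      · exact swap_comm _ _
    -- then swap p q = swap a d * swap a b * swap a d = swap d b
    rw [h2] at h
    have hbd : b ≠ d := fun h => hne (by rw [h])
    have h3 : swap p q = swap a d * swap a b * swap a d := by
      rw [mul_assoc, h, ← mul_assoc, swap_mul_self, one_mul]
    have h4 : swap p q d = b := by
      rw [h3]; simp [swap_apply_of_ne_of_ne hab.ne.symm hbd]
    have h5 : G.Adj d b := by
      by_cases hp : d = p
      · subst hp; rw [swap_apply_left] at h4; rwa [← h4]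
      · by_cases hq : d = q
        · subst hq; rw [swap_apply_right] at h4; rw [← h4]; exact hpq.symm
        · rw [swap_apply_of_ne_of_ne hp hq] at h4; exact absurd h4.symm hbd
    exact htri _ _ _ hab.symm had h5.symm
  have hac : a ≠ c := by
    rintro rfl
    exact sh a b d ha hb hd hab hcd hne h hrs
  have had : a ≠ d := by
    rintro rfl
    rw [swap_comm c a] at h hne
    exact sh a b c ha hb hc hab hcd.symm hne h hrs
  have hbc : b ≠ c := by
    rintro rfl
    rw [swap_comm a b] at h hne hrs
    exact sh b a d hb ha hd hab.symm hcd hne h hrs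
  have hbd : b ≠ d := by
    rintro rfl
    rw [swap_comm a b] at h hne hrs
    rw [swap_comm c b] at h hne
    exact sh b a c hb ha hc hab.symm hcd.symm hne h hrs
  refine ⟨?_, dd_mk ha hb hc hd hab hcd hac had hbc hbd, ?_⟩
  · rcases L1 hab.ne hcd.ne hac had hbc hbd hef.ne h with h1 | h1
    · exact absurd h1.symm hrs
    · exact h1
  · intro e f p q hef h
    rcases L1 hab.ne hcd.ne hac had hbc hbd hef h with h1 | h1 <;> rw [h1] <;> assumption

/-- neighbours of `x` -/
def nbs (G : SimpleGraph V) [DecidableRel G.Adj] (X : Finset V) (x : Perm V) : Finset (Perm V) :=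
  (ES G X).image fun t => x * t

theorem mem_nbs {X : Finset V} {x z : Perm V} : z ∈ nbs G X x ↔ ∃ t ∈ ES G X, z = x * t := by
  simp only [nbs, mem_image]
  constructor <;> rintro ⟨t, ht, rfl⟩ <;> exact ⟨t, ht, rfl⟩

theorem card_nbs {X : Finset V} (x : Perm V) : (nbs G X x).card = (ES G X).card :=
  card_image_of_injective _ (mul_right_injective x)

theorem mem_nbs_symm {X : Finset V} {x z : Perm V} (h : z ∈ nbs G X x) : x ∈ nbs G X z := by
  obtain ⟨t, ht, rfl⟩ := mem_nbs.1 h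
  exact mem_nbs.2 ⟨t, ht, by rw [mul_assoc, ES_sq ht, mul_one]⟩

theorem cn_two {X : Finset V} (htri : Tri G) {x y : Perm V} (hxy : x ≠ y) {z w : Perm V} (hzw : z ≠ w)
    (hz : z ∈ nbs G X x ∩ nbs G X y) (hw : w ∈ nbs G X x ∩ nbs G X y) :
    DD G X (x⁻¹ * y) ∧ (∀ e f p q, e ≠ f → x⁻¹ * y = swap e f * swap p q → swap e f ∈ ES G X) ∧
      x⁻¹ * w = z⁻¹ * y := by
  rw [mem_inter, mem_nbs, mem_nbs] at hz hw
  obtain ⟨⟨r, hr, rfl⟩, ⟨r', hr', e1⟩⟩ := hz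
  obtain ⟨⟨s, hs, rfl⟩, ⟨s', hs', e2⟩⟩ := hw
  have g1 : x⁻¹ * y = r * r' := by
    have : y = x * r * r' := by rw [e1, mul_assoc, ES_sq hr', mul_one]
    rw [this]; group
  have g2 : x⁻¹ * y = s * s' := by
    have : y = x * s * s' := by rw [e2, mul_assoc, ES_sq hs', mul_one]
    rw [this]; group
  have hne : r ≠ r' := by
    rintro rfl
    rw [ES_sq hr, inv_mul_eq_one] at g1
    exact hxy g1
  obtain ⟨h1, h2, h3⟩ := com htri hr hr' hs hs' (g1 ▸ g2) hne (fun h => hzw (by rw [h]))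
  rw [g1]
  refine ⟨h2, h3, ?_⟩
  rw [inv_mul_cancel_left, h1, mul_inv_rev, mul_assoc, g1, inv_mul_cancel_left]

theorem cn_le {X : Finset V} (htri : Tri G) {x y : Perm V} (hxy : x ≠ y) :
    (nbs G X x ∩ nbs G X y).card ≤ 2 := by
  by_contra hcon
  push Not at hcon
  obtain ⟨z, w, u, hz, hw, hu, h1, h2, h3⟩ := two_lt_card_iff.1 hcon
  have := (cn_two htri hxy h1 hz hw).2.2
  have := (cn_two htri hxy h2 hz hu).2.2
  apply h3
  apply mul_left_cancel (a := x⁻¹)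
  simp_all

end UG

namespace UG
open Equiv Finset
set_option linter.unusedSectionVars false
set_option linter.unusedVariables false
variable {V : Type*} [Fintype V] [DecidableEq V] {G : SimpleGraph V} [DecidableRel G.Adj]

/-- `z` lies in the closed neighbourhood of `R` inside the copies -/
def Cl (G : SimpleGraph V) [DecidableRel G.Adj] (X : Finset V) (k : V) (R : Finset (Perm V)) (z : Perm V) : Prop :=
  ∃ q ∈ R, z k = q k ∧ (z = q ∨ ∃ t ∈ ES G X, z = q * t)

theorem Klem {X : Finset V} {i i' : V} (hne : i ≠ i') (hii : ¬ G.Adj i i') {p q : Perm V}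
    (h : p = q ∨ ∃ t ∈ ES G X, p = q * t) (h1 : p i = q i') : False := by
  rcases h with rfl | ⟨t, ht, rfl⟩
  · exact hne (p.injective h1)
  · rw [Perm.mul_apply] at h1
    have h2 := q.injective h1
    obtain ⟨a, ha, b, hb, hab, rfl⟩ := mem_ES.1 ht
    by_cases e1 : i = a
    · subst e1; rw [swap_apply_left] at h2; subst h2; exact hii hab
    · by_cases e2 : i = b
      · subst e2; rw [swap_apply_right] at h2; subst h2; exact hii hab.symm
      · rw [swap_apply_of_ne_of_ne e1 e2] at h2; exact hne h2

theorem c3 {X : Finset V} {k i i' : V} (hki : k ≠ i) (hki' : k ≠ i') (hne : i ≠ i') (hii : ¬ G.Adj i i')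
    {R : Finset (Perm V)} {u1 : V} {y z : Perm V} (hy : y ∈ R) (hz : z ∈ R) (huy : u1 ≠ y k) (huz : u1 ≠ z k)
    (hyz : y k ≠ z k) (hval : ∀ r ∈ R, r k = u1 ∨ r = y ∨ r = z)
    (hE : ∀ r ∈ R, Cl G X k R (r * swap k i) ∧ Cl G X k R (r * swap k i')) : False := by
  have vals : ∀ r ∈ R, (r i = u1 ∨ r i = y k ∨ r i = z k) ∧ (r i' = u1 ∨ r i' = y k ∨ r i' = z k) := by
    intro r hr
    obtain ⟨⟨q, hq, e, -⟩, ⟨q', hq', e', -⟩⟩ := hE r hr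
    rw [Perm.mul_apply, swap_apply_left] at e e'
    constructor
    · rw [e]; rcases hval q hq with h | h | h
      · exact Or.inl h
      · rw [h]; simp
      · rw [h]; simp
    · rw [e']; rcases hval q' hq' with h | h | h
      · exact Or.inl h
      · rw [h]; simp
      · rw [h]; simp
  have si : ∀ r : Perm V, (r * swap k i) k = r i ∧ (r * swap k i) i = r k ∧ (r * swap k i) i' = r i' := by
    intro r; simp [swap_apply_of_ne_of_ne hki'.symm hne.symm]
  have si' : ∀ r : Perm V, (r * swap k i') k = r i' ∧ (r * swap k i') i' = r k ∧ (r * swap k i') i = r i := by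
    intro r; simp [swap_apply_of_ne_of_ne hki.symm hne]
  have nn : ∀ r : Perm V, r k ≠ r i ∧ r k ≠ r i' ∧ r i ≠ r i' := fun r =>
    ⟨fun h => hki (r.injective h), fun h => hki' (r.injective h), fun h => hne (r.injective h)⟩
  -- closure in copy of z
  have clz : ∀ w, Cl G X k R w → w k = z k → w i ≠ z i' := by
    rintro w ⟨q, hq, e, h⟩ hw h2
    rcases hval q hq with h3 | h3 | h3
    · rw [e, h3] at hw; exact huz hw
    · rw [e, h3] at hw; exact hyz hw
    · subst h3; exact Klem hne hii h h2
  have cl1 : ∀ w, Cl G X k R w → w k = u1 → ∃ x ∈ R, x k = u1 ∧ w i ≠ x i' := by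
    rintro w ⟨q, hq, e, h⟩ hw
    exact ⟨q, hq, by rw [← e, hw], fun h2 => Klem hne hii h h2⟩
  have vy := vals y hy
  have vz := vals z hz
  have ny := nn y
  have nz := nn z
  have ysz := clz _ (hE y hy).1
  have ys'z := clz _ (hE y hy).2
  rw [(si y).1, (si y).2.1] at ysz
  rw [(si' y).1, (si' y).2.2] at ys'z
  have ys1 := cl1 _ (hE y hy).1
  have ys'1 := cl1 _ (hE y hy).2
  rw [(si y).1, (si y).2.1] at ys1
  rw [(si' y).1, (si' y).2.2] at ys'1
  by_cases h1 : y i = u1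
  · obtain ⟨x, hx, hx1, hx2⟩ := ys1 h1
    have vx := vals x hx
    have nx := nn x
    have xs' := clz _ (hE x hx).2
    rw [(si' x).1, (si' x).2.2] at xs'
    grind
  · have h2 : y i' = u1 := by grind
    obtain ⟨x, hx, hx1, hx2⟩ := ys'1 h2
    have vx := vals x hx
    have nx := nn x
    have xs' := clz _ (hE x hx).1
    rw [(si x).1, (si x).2.1] at xs'
    grind

theorem c2vals {k i i' : V} (hki : k ≠ i) (hki' : k ≠ i') (hne : i ≠ i') {x y : Perm V}
    (h : y * swap k i = x * swap k i') : y i = x i' ∧ y k = x i ∧ y i' = x k := by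
  refine ⟨?_, ?_, ?_⟩
  · simpa using congrArg (fun p : Perm V => p k) h
  · simpa [swap_apply_of_ne_of_ne hki.symm hne] using congrArg (fun p : Perm V => p i) h
  · simpa [swap_apply_of_ne_of_ne hki'.symm hne.symm] using congrArg (fun p : Perm V => p i') h

theorem c2a {X : Finset V} {k i i' : V} (hki : k ≠ i) (hki' : k ≠ i') (hne : i ≠ i') (hii : ¬ G.Adj i i')
    {R : Finset (Perm V)} {x y : Perm V} (hx : x ∈ R) 
    (hy1 : ∀ r ∈ R, r k = y k → r = y)
    (hE : (x * swap k i) k = y k → Cl G X k R (x * swap k i))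
    (h : y * swap k i = x * swap k i') : False := by
  obtain ⟨v1, v2, v3⟩ := c2vals hki hki' hne h
  have e : (x * swap k i) k = y k := by simp [v2]
  obtain ⟨q, hq, e', hh⟩ := hE e
  have : q = y := hy1 q hq (by rw [← e', e])
  subst this
  refine Klem hne hii hh ?_
  simp [v3]

theorem swap3 {k i i' : V} (hki : k ≠ i) (hki' : k ≠ i') (hne : i ≠ i') :
    swap k i' * swap k i * swap k i' = swap i i' := by
  rw [swap_comm k i, swap_comm i i']
  exact swap_mul_swap_mul_swap hki.symm hne

theorem c2b {X : Finset V} {k i i' : V} (hki : k ≠ i) (hki' : k ≠ i') (hne : i ≠ i') (hii : ¬ G.Adj i i')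
    {R : Finset (Perm V)} {x y : Perm V} 
    (hE : (y * swap k i') k = x k → Cl G X k R (y * swap k i'))
    (h : y * swap k i = x * swap k i') : ∃ r ∈ R, r k = x k ∧ r ≠ x ∧
      (r = x * swap i i' ∨ ∃ t ∈ ES G X, r = x * swap i i' * t) := by
  obtain ⟨v1, v2, v3⟩ := c2vals hki hki' hne h
  have e : (y * swap k i') k = x k := by simp [v3]
  obtain ⟨q, hq, e', hh⟩ := hE e
  have hy : y * swap k i' = x * swap i i' := by
    rw [← swap3 hki hki' hne, ← mul_assoc, ← mul_assoc, ← h, mul_assoc y, swap_mul_self, mul_one]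
  refine ⟨q, hq, by rw [← e', e], ?_, ?_⟩
  · rintro rfl
    refine Klem hne hii hh ?_
    simp [swap_apply_of_ne_of_ne hki.symm hne, v1]
  · rw [hy] at hh
    rcases hh with hh | ⟨t, ht, hh⟩
    · exact Or.inl hh.symm
    · exact Or.inr ⟨t, ht, by rw [hh, mul_assoc, ES_sq ht, mul_one]⟩


theorem nb_pair {X : Finset V} (htri : Tri G) {d : ℕ} (hL : Loc G X d) {i i' : V} (hne : i ≠ i') (hii : ¬ G.Adj i i')
    {x r : Perm V} (hxr : r ≠ x) (h : r = x * swap i i' ∨ ∃ t ∈ ES G X, r = x * swap i i' * t) :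
    2 * d ≤ (nb G X {x, r}).card + 1 := by
  have hd : d ≤ (ES G X).card := by
    have h1 := hL {x} (singleton_nonempty x)
    have h2 : nb G X {x} ⊆ nbs G X x := by
      intro z hz
      obtain ⟨⟨r, hr, t, ht, rfl⟩, -⟩ := mem_nb.1 hz
      rw [mem_singleton] at hr; subst hr
      exact mem_nbs.2 ⟨t, ht, rfl⟩
    have h3 := card_le_card h2
    rw [card_nbs] at h3
    rw [card_singleton] at h1
    omega
  have hES : swap i i' ∉ ES G X := by
    intro h
    exact Klem (G := G) (X := X) (p := swap i i') (q := 1) hne hii (Or.inr ⟨_, h, by simp⟩) (by simp)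
  have hadj : r ∉ nbs G X x := by
    intro hr
    obtain ⟨t0, ht0, e0⟩ := mem_nbs.1 hr
    rcases h with h | ⟨t, ht, h⟩
    · rw [e0] at h; rw [mul_left_cancel h] at ht0; exact hES ht0
    · rw [e0, mul_assoc] at h
      have h1 := mul_left_cancel h
      have h2 := congrArg Perm.sign h1
      rw [Perm.sign_mul, ES_sign ht0, ES_sign ht, Perm.sign_swap hne] at h2
      exact absurd h2 (by decide)
  have hsub : nbs G X x ∪ nbs G X r ⊆ nb G X {x, r} := by
    intro z hz
    have self : ∀ y, y ∉ nbs G X y := by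
      intro y hy
      obtain ⟨t, ht, e⟩ := mem_nbs.1 hy
      have h2 := congrArg Perm.sign e
      rw [Perm.sign_mul, ES_sign ht] at h2
      rcases Int.units_eq_one_or (Perm.sign y) with h | h <;> rw [h] at h2 <;> exact absurd h2 (by decide)
    have hadj2 : x ∉ nbs G X r := fun h => hadj (mem_nbs_symm h)
    refine mem_nb.2 ⟨?_, ?_⟩
    · rcases mem_union.1 hz with hz | hz <;> obtain ⟨t, ht, e⟩ := mem_nbs.1 hz
      · exact ⟨x, by simp, t, ht, e⟩
      · exact ⟨r, by simp, t, ht, e⟩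
    · rw [mem_insert, mem_singleton]
      rintro (rfl | rfl)
      · rcases mem_union.1 hz with hz | hz
        · exact self _ hz
        · exact hadj2 hz
      · rcases mem_union.1 hz with hz | hz
        · exact hadj hz
        · exact self _ hz
  have hIn : (nbs G X x ∩ nbs G X r).card ≤ 1 := by
    by_contra hcon
    push Not at hcon
    obtain ⟨z, w, hz, hw, hzw⟩ := one_lt_card_iff.1 hcon
    have := (cn_two htri hxr.symm hzw hz hw).2.1
    rcases h with h | ⟨t, ht, h⟩
    · exact hES (this i i' i i hne (by rw [h]; simp; rfl))
    · obtain ⟨a, ha, b, hb, hab, rfl⟩ := mem_ES.1 ht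
      exact hES (this i i' a b hne (by rw [h]; group))
  have := card_le_card hsub
  have h2 := card_union_add_card_inter (nbs G X x) (nbs G X r)
  rw [card_nbs, card_nbs] at h2
  omega

theorem Loc.cyc {X : Finset V} (htri : Tri G) {d : ℕ} (hL : Loc G X d) {k i i' : V} (hk : k ∉ X) (hi : i ∈ X)
    (hi' : i' ∈ X) (hne : i ≠ i')
    (hki : G.Adj k i) (hki' : G.Adj k i') : Loc G (insert k X) (d + 2) := by
  have hii : ¬ G.Adj i i' := htri _ _ _ hki.symm hki'
  have hs : swap k i ∈ ES G (insert k X) := mem_ES.2 ⟨k, by simp, i, by simp [hi], hki, rfl⟩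
  have hs' : swap k i' ∈ ES G (insert k X) := mem_ES.2 ⟨k, by simp, i', by simp [hi'], hki', rfl⟩
  intro R hR
  have hsub : nb G X R ⊆ nb G (insert k X) R := nb_mono (subset_insert _ _) R
  set E := nb G (insert k X) R \ nb G X R with hEdef
  have hEc : (nb G (insert k X) R).card = (nb G X R).card + E.card := by
    rw [hEdef, add_comm]; exact (card_sdiff_add_card_eq_card hsub).symm
  have hcl : ∀ r ∈ R, ∀ t ∈ ES G (insert k X), r * t ∉ E → Cl G X k R (r * t) := by
    intro r hr t ht hE
    by_cases h1 : r * t ∈ R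
    · exact ⟨_, h1, rfl, Or.inl rfl⟩
    · have h2 : r * t ∈ nb G (insert k X) R := mem_nb.2 ⟨⟨r, hr, t, ht, rfl⟩, h1⟩
      have h3 : r * t ∈ nb G X R := by
        by_contra h3; exact hE (mem_sdiff.2 ⟨h2, h3⟩)
      obtain ⟨q, hq, e, h⟩ := nb_val hk h3
      exact ⟨q, hq, e, Or.inr h⟩
  have hinE : ∀ r ∈ R, ∀ t ∈ ES G (insert k X), (∀ q ∈ R, (r * t) k ≠ q k) → r * t ∈ E := by
    intro r hr t ht h
    by_contra h1
    obtain ⟨q, hq, e, -⟩ := hcl r hr t ht h1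
    exact h q hq e
  have hcpos : 1 ≤ (R.image (fun h => h k)).card := card_pos.2 (hR.image _)
  have h2 := hL.sum hk R
  have hm := card_eq_cls R k
  have hpos : ∀ j ∈ R.image (fun h => h k), 1 ≤ (R.filter fun h => h k = j).card := fun j hj => cls_pos hj
  rcases (show (R.image (fun h => h k)).card = 1 ∨ (R.image (fun h => h k)).card = 2 ∨
    (R.image (fun h => h k)).card = 3 ∨ 4 ≤ (R.image (fun h => h k)).card by omega) with h1 | h1 | h1 | h1
  · have hd : Disjoint (R.image (fun r => r * swap k i)) (R.image (fun r => r * swap k i')) := by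
      rw [disjoint_left]
      intro x hx hx2
      obtain ⟨r, hr, rfl⟩ := mem_image.1 hx
      obtain ⟨r', hr', e⟩ := mem_image.1 hx2
      obtain ⟨v1, v2, v3⟩ := c2vals hki.ne hki'.ne hne e.symm
      exact ext_notMem hki.ne h1 hr' v2 hr
    have hs2 : R.image (fun r => r * swap k i) ∪ R.image (fun r => r * swap k i') ⊆ E := by
      apply union_subset
      · intro x hx
        obtain ⟨r, hr, rfl⟩ := mem_image.1 hx
        apply hinE r hr _ hs
        intro q hq e
        exact ext_notMem hki.ne h1 hr (x := q) (by rw [← e]; simp) hq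
      · intro x hx
        obtain ⟨r, hr, rfl⟩ := mem_image.1 hx
        apply hinE r hr _ hs'
        intro q hq e
        exact ext_notMem hki'.ne h1 hr (x := q) (by rw [← e]; simp) hq
    have := card_le_card hs2
    rw [card_union_of_disjoint hd, card_image_of_injective _ (mul_left_injective _),
      card_image_of_injective _ (mul_left_injective _)] at this
    have := hL R hR
    nlinarith
  · obtain ⟨u1, u2, hu, hU⟩ := card_eq_two.1 h1
    -- order the two classes
    have main : ∀ u1 u2 : V, u1 ≠ u2 → R.image (fun h => h k) = {u1, u2} →
        (R.filter fun h => h k = u2).card ≤ (R.filter fun h => h k = u1).card →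
        2 * R.card * (d + 2) + 2 ≤ 2 * (nb G (insert k X) R).card + R.card * (R.card + 1) := by
      clear hu hU u1 u2
      intro u1 u2 hu hU hle
      rw [hU] at h2 hm hpos
      rw [sum_pair hu] at h2 hm
      have p1 := hpos u1 (by simp)
      have p2 := hpos u2 (by simp)
      have hval : ∀ r ∈ R, r k = u1 ∨ r k = u2 := by
        intro r hr
        have : r k ∈ R.image (fun h => h k) := mem_image_of_mem (fun h : Perm V => h k) hr
        rwa [hU, mem_insert, mem_singleton] at this
      have hcard2 : ({u1, u2} : Finset V).card = 2 := card_pair hu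
      rw [hcard2] at h2
      -- the chosen external neighbour
      have cho : ∀ u v : V, u ≠ v → (∀ r ∈ R, r k = u ∨ r k = v) → ∃ f : Perm V → Perm V,
          (∀ x, f x = x * swap k i ∨ f x = x * swap k i') ∧
          (∀ x, x k = u → f x k ≠ u ∧ f x k ≠ v) ∧
          (∀ x ∈ R, x k = u → f x ∈ E) ∧
          (∀ x y, x k = u → y k = u → f x = f y → x = y) := by
        intro u v huv hval
        refine ⟨fun x => if x i ≠ v then x * swap k i else x * swap k i', ?_, ?_, ?_, ?_⟩
        · intro x; by_cases h : x i ≠ v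
          · simp [h]
          · simp [h]
        · intro x hx; by_cases h : x i ≠ v
          · simp only [h, if_true, ne_eq, not_false_eq_true, Perm.mul_apply, swap_apply_left]
            refine ⟨?_, trivial⟩
            rw [← hx]; exact fun e => hki.ne (x.injective e.symm)
          · have h' : x i = v := by simpa using h
            simp only [h, if_false, Perm.mul_apply, swap_apply_left]
            refine ⟨?_, ?_⟩
            · rw [← hx]; exact fun e => hki'.ne (x.injective e.symm)
            · rw [← h']; exact fun e => hne (x.injective e.symm)
        · intro x hxR hx
          by_cases h : x i ≠ v
          · simp only [h, if_true, ne_eq, not_false_eq_true]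
            apply hinE x hxR _ hs
            intro q hq e
            simp only [Perm.mul_apply, swap_apply_left] at e
            rcases hval q hq with h3 | h3
            · rw [h3, ← hx] at e; exact hki.ne (x.injective e.symm)
            · rw [h3] at e; exact h e
          · have h' : x i = v := by simpa using h
            simp only [h, if_false]
            apply hinE x hxR _ hs'
            intro q hq e
            simp only [Perm.mul_apply, swap_apply_left] at e
            rcases hval q hq with h3 | h3
            · rw [h3, ← hx] at e; exact hki'.ne (x.injective e.symm)
            · rw [h3, ← h'] at e; exact hne (x.injective e.symm)
        · intro x y hx hy e
          by_cases h : x i ≠ v <;> by_cases h' : y i ≠ v <;> simp only [h, h', if_true, if_false, ne_eq, not_false_eq_true] at e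
          · exact mul_right_cancel e
          · obtain ⟨v1, v2, v3⟩ := c2vals hki.ne hki'.ne hne e
            exact absurd (by rw [← v2, hx]; exact huv) h'
          · obtain ⟨v1, v2, v3⟩ := c2vals hki.ne hki'.ne hne e.symm
            exact absurd (by rw [← v2, hy]; exact huv) h
          · exact mul_right_cancel e
      obtain ⟨f, f1, f2, f3, f4⟩ := cho u1 u2 hu hval
      obtain ⟨g, g1, g2, g3, g4⟩ := cho u2 u1 hu.symm (fun r hr => (hval r hr).symm)
      have hfsub : (R.filter fun h => h k = u1).image f ⊆ E := by
        intro z hz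
        obtain ⟨x, hx, rfl⟩ := mem_image.1 hz
        rw [mem_filter] at hx
        exact f3 x hx.1 hx.2
      have hfc : ((R.filter fun h => h k = u1).image f).card = (R.filter fun h => h k = u1).card := by
        apply card_image_of_injOn
        intro x hx y hy e
        simp only [coe_filter, Set.mem_ofPred_eq] at hx hy
        exact f4 x y hx.2 hy.2 e
      have hEge := card_le_card hfsub
      rw [hfc] at hEge
      -- consequence of equality
      have eqcase : E.card ≤ (R.filter fun h => h k = u1).card → ∃ x ∈ R, ∃ y ∈ R, x k = u1 ∧ y k = u2 ∧
          (y * swap k i = x * swap k i' ∨ y * swap k i' = x * swap k i) ∧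
          (∀ r ∈ R, ∀ t ∈ ES G (insert k X), (r * t) k = u1 ∨ (r * t) k = u2 → Cl G X k R (r * t)) := by
        intro hle2
        have heq : (R.filter fun h => h k = u1).image f = E := eq_of_subset_of_card_le hfsub (by rw [hfc]; exact hle2)
        obtain ⟨y, hy⟩ := card_pos.1 p2
        rw [mem_filter] at hy
        have hw := g3 y hy.1 hy.2
        rw [← heq] at hw
        obtain ⟨x, hx, e⟩ := mem_image.1 hw
        rw [mem_filter] at hx
        have hxy : y ≠ x := by rintro rfl; exact hu (hx.2.symm.trans hy.2)
        refine ⟨x, hx.1, y, hy.1, hx.2, hy.2, ?_, ?_⟩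
        · rcases f1 x with a | a <;> rcases g1 y with b | b <;> rw [a, b] at e
          · exact absurd (mul_right_cancel e).symm hxy
          · exact Or.inr e.symm
          · exact Or.inl e.symm
          · exact absurd (mul_right_cancel e).symm hxy
        · intro r hr t ht hv
          apply hcl r hr t ht
          intro hE
          rw [← heq] at hE
          obtain ⟨x', hx', e'⟩ := mem_image.1 hE
          rw [mem_filter] at hx'
          have := f2 x' hx'.2
          rw [e'] at this
          rcases hv with hv | hv
          · exact this.1 hv
          · exact this.2 hv
      set m1 := (R.filter fun h => h k = u1).card with hm1
      set m2 := (R.filter fun h => h k = u2).card with hm2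
      have suff : 2 * R.card ≤ E.card + m1 * m2 + 1 → 2 * R.card * (d + 2) + 2 ≤ 2 * (nb G (insert k X) R).card + R.card * (R.card + 1) := by
        intro hsf
        rw [hEc]
        zify at h2 hm hsf ⊢
        rw [hm] at h2 hsf ⊢
        nlinarith
      by_cases hbig : 2 ≤ m2 ∧ 3 ≤ m1
      · apply suff
        obtain ⟨b1, b2⟩ := hbig
        obtain ⟨a, ha⟩ := Nat.exists_eq_add_of_le b1
        obtain ⟨b, hb⟩ := Nat.exists_eq_add_of_le b2
        rw [hm, ha, hb] at *
        nlinarith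
      · by_cases hsm : m2 = 1
        · apply suff
          have : m1 + 1 ≤ E.card := by
            by_contra hcon
            obtain ⟨x, hx, y, hy, hxk, hyk, hor, hC⟩ := eqcase (by omega)
            have hy1 : ∀ r ∈ R, r k = y k → r = y := by
              intro r hr hrk
              obtain ⟨y0, hy0⟩ := card_eq_one.1 hsm
              have a1 : r ∈ R.filter fun h => h k = u2 := mem_filter.2 ⟨hr, by rw [hrk, hyk]⟩
              have a2 : y ∈ R.filter fun h => h k = u2 := mem_filter.2 ⟨hy, hyk⟩
              rw [hy0, mem_singleton] at a1 a2
              rw [a1, a2]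
            rcases hor with h | h
            · exact c2a hki.ne hki'.ne hne hii hx hy1 (fun e => hC x hx _ hs (Or.inr (e.trans hyk))) h
            · exact c2a hki'.ne hki.ne hne.symm (fun h => hii h.symm) hx hy1 (fun e => hC x hx _ hs' (Or.inr (e.trans hyk))) h
          rw [hm, hsm, mul_one]
          omega
        · have e1 : m1 = 2 := by omega
          have e2 : m2 = 2 := by omega
          by_cases hE3 : 3 ≤ E.card
          · apply suff; rw [hm, e1, e2]; omega
          · obtain ⟨x, hx, y, hy, hxk, hyk, hor, hC⟩ := eqcase (by omega)
            obtain ⟨r, hr, hrk, hrx, hrr⟩ : ∃ r ∈ R, r k = x k ∧ r ≠ x ∧ 2 * d ≤ (nb G X {x, r}).card + 1 := by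
              rcases hor with h | h
              · obtain ⟨r, hr, a, b, c⟩ := c2b (X := X) (R := R) hki.ne hki'.ne hne hii (fun e => hC y hy _ hs' (Or.inl (e.trans hxk))) h
                exact ⟨r, hr, a, b, nb_pair htri hL hne hii b c⟩
              · obtain ⟨r, hr, a, b, c⟩ := c2b (X := X) (R := R) hki'.ne hki.ne hne.symm (fun h => hii h.symm) (fun e => hC y hy _ hs (Or.inl (e.trans hxk))) h
                exact ⟨r, hr, a, b, nb_pair htri hL hne.symm (fun h => hii h.symm) b c⟩
            have hR1 : ({x, r} : Finset (Perm V)) = R.filter fun h => h k = u1 := by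
              apply eq_of_subset_of_card_le
              · intro z hz
                rw [mem_insert, mem_singleton] at hz
                rcases hz with rfl | rfl
                · exact mem_filter.2 ⟨hx, hxk⟩
                · exact mem_filter.2 ⟨hr, hrk.trans hxk⟩
              · rw [card_pair hrx.symm]; omega
            rw [hR1] at hrr
            have hR2 := hL (R.filter fun h => h k = u2) (card_pos.1 (by omega))
            have hsum := card_nb_eq (G := G) hk R
            rw [hU, sum_pair hu] at hsum
            rw [hEc]
            rw [← hm2, e2] at hR2
            rw [hm, e1, e2]
            omega
    rcases le_total (R.filter fun h => h k = u2).card (R.filter fun h => h k = u1).card with h | h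
    · exact main u1 u2 hu hU h
    · exact main u2 u1 hu.symm (by rw [hU, pair_comm]) h
  · obtain ⟨u1, u2, u3, h12, h13, h23, hU⟩ := card_eq_three.1 h1
    have hval : ∀ r ∈ R, r k = u1 ∨ r k = u2 ∨ r k = u3 := by
      intro r hr
      have : r k ∈ R.image (fun h => h k) := mem_image_of_mem (fun h : Perm V => h k) hr
      rwa [hU, mem_insert, mem_insert, mem_singleton] at this
    have three : ∀ f : V → ℕ, ∑ j ∈ R.image (fun h => h k), f j = f u1 + f u2 + f u3 := by
      intro f
      rw [hU, sum_insert (by simp [h12, h13]), sum_pair h23, add_assoc]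
    have threeZ : ∀ f : V → ℤ, ∑ j ∈ R.image (fun h => h k), f j = f u1 + f u2 + f u3 := by
      intro f
      rw [hU, sum_insert (by simp [h12, h13]), sum_pair h23, add_assoc]
    rw [three] at hm
    rw [threeZ, h1] at h2
    have p1 := hpos u1 (by rw [hU]; simp)
    have p2 := hpos u2 (by rw [hU]; simp)
    have p3 := hpos u3 (by rw [hU]; simp)
    have single : ∀ u, (R.filter fun h => h k = u).card = 1 → ∃ y ∈ R, y k = u ∧ ∀ r ∈ R, r k = u → r = y := by
      intro u hu
      obtain ⟨y, hy⟩ := card_eq_one.1 hu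
      have : y ∈ R.filter fun h => h k = u := by rw [hy]; simp
      rw [mem_filter] at this
      refine ⟨y, this.1, this.2, ?_⟩
      intro r hr hru
      have : r ∈ R.filter fun h => h k = u := mem_filter.2 ⟨hr, hru⟩
      rwa [hy, mem_singleton] at this
    have sing2 : ∀ v1 v2 v3 : V, v1 ≠ v2 → v1 ≠ v3 → v2 ≠ v3 → (∀ r ∈ R, r k = v1 ∨ r k = v2 ∨ r k = v3) →
        (R.filter fun h => h k = v2).card = 1 → (R.filter fun h => h k = v3).card = 1 → 1 ≤ E.card := by
      intro v1 v2 v3 g12 g13 g23 hv s2 s3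
      by_contra hcon
      have hE0 : E = ∅ := card_eq_zero.1 (by omega)
      obtain ⟨y, hy, hyk, hy1⟩ := single v2 s2
      obtain ⟨z, hz, hzk, hz1⟩ := single v3 s3
      refine c3 (X := X) hki.ne hki'.ne hne hii (u1 := v1) hy hz (by rw [hyk]; exact g12) (by rw [hzk]; exact g13)
        (by rw [hyk, hzk]; exact g23) ?_ ?_
      · intro r hr
        rcases hv r hr with h | h | h
        · exact Or.inl h
        · exact Or.inr (Or.inl (hy1 r hr h))
        · exact Or.inr (Or.inr (hz1 r hr h))
      · intro r hr
        exact ⟨hcl r hr _ hs (by rw [hE0]; simp), hcl r hr _ hs' (by rw [hE0]; simp)⟩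
    have q1 := sing2 u1 u2 u3 h12 h13 h23 hval
    have q2 := sing2 u2 u1 u3 h12.symm h23 h13 (fun r hr => by rcases hval r hr with h | h | h <;> simp [h])
    have q3 := sing2 u3 u1 u2 h13.symm h23.symm h12 (fun r hr => by rcases hval r hr with h | h | h <;> simp [h])
    rw [hEc]
    generalize (R.filter fun h => h k = u1).card = m1 at *
    generalize (R.filter fun h => h k = u2).card = m2 at *
    generalize (R.filter fun h => h k = u3).card = m3 at *
    obtain ⟨a, rfl⟩ := Nat.exists_eq_add_of_le p1
    obtain ⟨b, rfl⟩ := Nat.exists_eq_add_of_le p2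
    obtain ⟨c, rfl⟩ := Nat.exists_eq_add_of_le p3
    have key : 1 ≤ E.card + a * b + a * c + b * c := by
      rcases Nat.eq_zero_or_pos a with ha | ha
      · rcases Nat.eq_zero_or_pos b with hb | hb
        · have := q3 (by omega) (by omega); nlinarith
        · rcases Nat.eq_zero_or_pos c with hc | hc
          · have := q2 (by omega) (by omega); nlinarith
          · nlinarith [Nat.mul_le_mul hb hc]
      · rcases Nat.eq_zero_or_pos b with hb | hb
        · rcases Nat.eq_zero_or_pos c with hc | hc
          · have := q1 (by omega) (by omega); nlinarith
          · nlinarith [Nat.mul_le_mul ha hc]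
        · nlinarith [Nat.mul_le_mul ha hb]
    clear q1 q2 q3 sing2 single three threeZ
    zify at h2 hm key ⊢
    rw [hm] at h2 ⊢
    nlinarith
  · have h3 := sum_sq_le (R.image (fun h => h k)) (fun j => ((R.filter fun h => h k = j).card : ℤ))
      (fun j hj => by exact_mod_cast cls_pos hj)
    have e1 : (∑ j ∈ R.image (fun h => h k), ((R.filter fun h => h k = j).card : ℤ)) = R.card := by
      rw [card_eq_cls R k]; push_cast; rfl
    rw [e1] at h3
    have hmc : (R.image (fun h => h k)).card ≤ R.card := card_image_le
    have h4 := card_le_card hsub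
    clear hm hpos hcl hinE
    zify at *
    set c : ℤ := ((R.image (fun h => h k)).card : ℤ)
    set m : ℤ := (R.card : ℤ)
    nlinarith [mul_nonneg (sub_nonneg.2 hmc) (show (0:ℤ) ≤ c - 3 by linarith), mul_nonneg (show (0:ℤ) ≤ c - 2 by linarith) (show (0:ℤ) ≤ c - 1 by linarith)]

theorem UniX.loc (htri : Tri G) {X : Finset V} (h : UniX G X) : Loc G X X.card := by
  induction h with
  | @cyc X k i i' hT hk hi hi' hne hki hki' hu =>
    have := hT.loc.cyc htri hk hi hi' hne hki hki'
    have h1 : 1 ≤ X.card := card_pos.2 ⟨i, hi⟩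
    rw [card_insert_of_notMem hk]
    rwa [show X.card - 1 + 2 = X.card + 1 by omega] at this
  | leaf hT hk hi hki hu ih =>
    rw [card_insert_of_notMem hk]
    exact ih.leaf hk hi hki hu

end UG

namespace UG
open Equiv Finset
set_option linter.unusedSectionVars false
set_option linter.unusedVariables false

theorem cnt {α β : Type*} [DecidableEq α] [DecidableEq β] (S : Finset α) (N : α → Finset β) :
    2 * (∑ x ∈ S, (N x).card) ≤ 2 * (S.biUnion N).card + ∑ x ∈ S, ∑ y ∈ S.erase x, (N x ∩ N y).card ∧
    4 * (∑ x ∈ S, (N x).card) ≤ 6 * (S.biUnion N).card + ∑ x ∈ S, ∑ y ∈ S.erase x, (N x ∩ N y).card := by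
  set Q := S.biUnion N with hQ
  have hsub : ∀ x ∈ S, N x ⊆ Q := fun x hx => subset_biUnion_of_mem N hx
  have hA : ∑ x ∈ S, (N x).card = ∑ z ∈ Q, (S.filter fun x => z ∈ N x).card := by
    have : ∀ x ∈ S, (N x).card = ∑ z ∈ Q, if z ∈ N x then 1 else 0 := by
      intro x hx
      rw [sum_boole, Nat.cast_id]
      congr 1
      ext z; simp only [mem_filter]
      exact ⟨fun h => ⟨hsub x hx h, h⟩, fun h => h.2⟩
    rw [sum_congr rfl this, sum_comm]
    refine sum_congr rfl fun z _ => ?_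
    rw [sum_boole, Nat.cast_id]
  have hB : ∑ x ∈ S, ∑ y ∈ S, (N x ∩ N y).card = ∑ z ∈ Q, (S.filter fun x => z ∈ N x).card ^ 2 := by
    have : ∀ x ∈ S, ∀ y ∈ S, (N x ∩ N y).card = ∑ z ∈ Q, (if z ∈ N x then 1 else 0) * (if z ∈ N y then 1 else 0) := by
      intro x hx y hy
      have : ∀ z ∈ Q, ((if z ∈ N x then 1 else 0) * (if z ∈ N y then 1 else 0) : ℕ) = if z ∈ N x ∧ z ∈ N y then 1 else 0 := by
        intro z _
        by_cases h1 : z ∈ N x <;> by_cases h2 : z ∈ N y <;> simp [h1, h2]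
      rw [sum_congr rfl this, sum_boole, Nat.cast_id]
      congr 1
      ext z; simp only [mem_filter, mem_inter]
      exact ⟨fun h => ⟨hsub x hx h.1, h⟩, fun h => h.2⟩
    rw [sum_congr rfl fun x hx => sum_congr rfl fun y hy => this x hx y hy]
    rw [sum_congr rfl fun x hx => sum_comm, sum_comm]
    refine sum_congr rfl fun z _ => ?_
    rw [← sum_mul_sum, sum_boole, Nat.cast_id, sq]
  have hC : ∑ x ∈ S, ∑ y ∈ S, (N x ∩ N y).card = ∑ x ∈ S, (N x).card + ∑ x ∈ S, ∑ y ∈ S.erase x, (N x ∩ N y).card := by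
    rw [← sum_add_distrib]
    refine sum_congr rfl fun x hx => ?_
    rw [← add_sum_erase S _ hx, inter_self]
  set B := ∑ x ∈ S, ∑ y ∈ S.erase x, (N x ∩ N y).card
  rw [hB] at hC
  set A := ∑ x ∈ S, (N x).card
  constructor
  · have : ∑ z ∈ Q, 3 * (S.filter fun x => z ∈ N x).card ≤ ∑ z ∈ Q, ((S.filter fun x => z ∈ N x).card ^ 2 + 2) := by
      refine sum_le_sum fun z _ => ?_
      generalize (S.filter fun x => z ∈ N x).card = c
      rcases Nat.lt_or_ge c 2 with h | h
      · interval_cases c <;> norm_num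
      · obtain ⟨e, rfl⟩ := Nat.exists_eq_add_of_le h; nlinarith
    rw [← mul_sum, sum_add_distrib, sum_const, smul_eq_mul, hC, ← hA] at this
    omega
  · have : ∑ z ∈ Q, 5 * (S.filter fun x => z ∈ N x).card ≤ ∑ z ∈ Q, ((S.filter fun x => z ∈ N x).card ^ 2 + 6) := by
      refine sum_le_sum fun z _ => ?_
      generalize (S.filter fun x => z ∈ N x).card = c
      rcases Nat.lt_or_ge c 3 with h | h
      · interval_cases c <;> norm_num
      · obtain ⟨e, rfl⟩ := Nat.exists_eq_add_of_le h; nlinarith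
    rw [← mul_sum, sum_add_distrib, sum_const, smul_eq_mul, hC, ← hA] at this
    omega

theorem mantel {α : Type*} [DecidableEq α] (S : Finset α) (r : α → α → Prop) [DecidableRel r]
    (hs : ∀ x y, r x y → r y x) (ht : ∀ x y z, r x y → r y z → ¬ r x z) :
    2 * ∑ x ∈ S, (S.filter (r x)).card ≤ S.card * S.card := by
  set D := ∑ x ∈ S, (S.filter (r x)).card with hD
  have h1 : ∀ x ∈ S, ∀ y ∈ S.filter (r x), (S.filter (r x)).card + (S.filter (r y)).card ≤ S.card := by
    intro x hx y hy
    rw [mem_filter] at hy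
    rw [← card_union_of_disjoint]
    · exact card_le_card (union_subset (filter_subset _ _) (filter_subset _ _))
    · rw [disjoint_left]
      intro z hz hz2
      rw [mem_filter] at hz hz2
      exact ht _ _ _ hy.2 hz2.2 hz.2
  have h2 := sum_le_sum fun x hx => sum_le_sum (h1 x hx)
  have e1 : ∑ x ∈ S, ∑ y ∈ S.filter (r x), (S.filter (r y)).card = ∑ x ∈ S, (S.filter (r x)).card ^ 2 := by
    simp_rw [sum_filter]
    rw [sum_comm]
    refine sum_congr rfl fun y hy => ?_
    rw [← sum_filter, sum_const, smul_eq_mul, sq]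
    congr 2
    ext x; simp only [mem_filter]
    exact ⟨fun h => ⟨h.1, hs _ _ h.2⟩, fun h => ⟨h.1, hs _ _ h.2⟩⟩
  simp only [sum_add_distrib, sum_const, smul_eq_mul] at h2
  rw [e1] at h2
  simp only [← sq, ← sum_mul] at h2
  have h3 := sq_sum_le_card_mul_sum_sq (s := S) (f := fun x => (S.filter (r x)).card)
  rw [← hD] at h2 h3
  rcases Nat.eq_zero_or_pos D with h0 | h0
  · rw [h0]; positivity
  · have : 2 * D * D ≤ S.card * S.card * D := by nlinarith
    exact Nat.le_of_mul_le_mul_right this h0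

variable {V : Type*} [Fintype V] [DecidableEq V] {G : SimpleGraph V} [DecidableRel G.Adj]

/-- pairs with two common neighbours -/
def HH (G : SimpleGraph V) [DecidableRel G.Adj] (X : Finset V) (x y : Perm V) : Prop :=
  x ≠ y ∧ 2 ≤ (nbs G X x ∩ nbs G X y).card

instance (X : Finset V) : DecidableRel (HH G X) := fun x y => by unfold HH; infer_instance

theorem HH_dd {X : Finset V} (htri : Tri G) {x y : Perm V} (h : HH G X x y) : DD G X (x⁻¹ * y) := by
  obtain ⟨z, w, hz, hw, hzw⟩ := one_lt_card_iff.1 h.2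
  exact (cn_two htri h.1 hzw hz hw).1

theorem HH_mantel {X : Finset V} (hX : X.card ≤ 5) (htri : Tri G) (S : Finset (Perm V)) :
    2 * ∑ x ∈ S, (S.filter (HH G X x)).card ≤ S.card * S.card := by
  apply mantel
  · intro x y h; exact ⟨h.1.symm, by rw [inter_comm]; exact h.2⟩
  · intro x y z h1 h2 h3
    refine dd_tri hX htri (HH_dd htri h1) (HH_dd htri h2) ?_
    rw [show x⁻¹ * y * (y⁻¹ * z) = x⁻¹ * z by group]
    exact HH_dd htri h3

/-- neighbourhood union -/
def Nb (G : SimpleGraph V) [DecidableRel G.Adj] (X : Finset V) (S : Finset (Perm V)) : Finset (Perm V) :=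
  S.biUnion (nbs G X)

theorem phi {X : Finset V} (hX : X.card ≤ 5) (htri : Tri G) (S : Finset (Perm V)) :
    2 * ((ES G X).card * S.card) ≤ 2 * (Nb G X S).card + S.card * (S.card - 1) + S.card * S.card / 2 ∧
    4 * ((ES G X).card * S.card) ≤ 6 * (Nb G X S).card + S.card * (S.card - 1) + S.card * S.card / 2 := by
  have h := cnt S (nbs G X)
  have hM := HH_mantel hX htri S
  have hA : ∑ x ∈ S, (nbs G X x).card = (ES G X).card * S.card := by
    simp_rw [card_nbs]; rw [sum_const, smul_eq_mul, mul_comm]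
  have hB : ∑ x ∈ S, ∑ y ∈ S.erase x, (nbs G X x ∩ nbs G X y).card ≤
      S.card * (S.card - 1) + ∑ x ∈ S, (S.filter (HH G X x)).card := by
    have : ∀ x ∈ S, ∑ y ∈ S.erase x, (nbs G X x ∩ nbs G X y).card ≤ (S.card - 1) + (S.filter (HH G X x)).card := by
      intro x hx
      calc _ ≤ ∑ y ∈ S.erase x, (1 + if HH G X x y then 1 else 0) := by
            refine sum_le_sum fun y hy => ?_
            have hxy : x ≠ y := (ne_of_mem_erase hy).symm
            by_cases hh : HH G X x y
            · simp only [hh, if_true]; exact cn_le htri hxy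
            · simp only [hh, if_false]
              by_contra hc
              exact hh ⟨hxy, by omega⟩
        _ ≤ _ := by
            rw [sum_add_distrib, sum_const, smul_eq_mul, mul_one, card_erase_of_mem hx, sum_boole, Nat.cast_id]
            gcongr
            exact erase_subset _ _
    calc _ ≤ ∑ x ∈ S, ((S.card - 1) + (S.filter (HH G X x)).card) := sum_le_sum this
      _ = _ := by rw [sum_add_distrib, sum_const, smul_eq_mul]
  rw [hA] at h
  change _ ≤ 2 * (Nb G X S).card + _ ∧ _ ≤ 6 * (Nb G X S).card + _ at h
  generalize S.card * (S.card - 1) = a at *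
  omega

theorem star {X : Finset V} (hX : X.card ≤ 5) (htri : Tri G) (S : Finset (Perm V)) (u : Perm V) :
    1 ≤ (S ∩ nbs G X u).card →
    2 + 2 * ((ES G X).card - 1) * (S ∩ nbs G X u).card ≤ 2 * (Nb G X S).card +
      (S ∩ nbs G X u).card * (S ∩ nbs G X u).card / 2 := by
  intro hpos
  set L := S ∩ nbs G X u with hL
  have hu : ∀ x ∈ L, u ∈ nbs G X x := fun x hx => mem_nbs_symm (mem_inter.1 hx).2
  have h := (cnt L (fun x => (nbs G X x).erase u)).1
  have hM := HH_mantel hX htri L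
  have hA : ∑ x ∈ L, ((nbs G X x).erase u).card = ((ES G X).card - 1) * L.card := by
    rw [sum_congr rfl fun x hx => card_erase_of_mem (hu x hx)]
    simp_rw [card_nbs]; rw [sum_const, smul_eq_mul, mul_comm]
  have hB : ∑ x ∈ L, ∑ y ∈ L.erase x, ((nbs G X x).erase u ∩ (nbs G X y).erase u).card ≤
      ∑ x ∈ L, (L.filter (HH G X x)).card := by
    refine sum_le_sum fun x hx => ?_
    calc _ ≤ ∑ y ∈ L.erase x, (if HH G X x y then 1 else 0) := by
            refine sum_le_sum fun y hy => ?_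
            have hxy : x ≠ y := (ne_of_mem_erase hy).symm
            have e : (nbs G X x).erase u ∩ (nbs G X y).erase u = (nbs G X x ∩ nbs G X y).erase u := by
              ext z; simp only [mem_inter, mem_erase]; tauto
            have hmem : u ∈ nbs G X x ∩ nbs G X y := mem_inter.2 ⟨hu x hx, hu y (mem_of_mem_erase hy)⟩
            rw [e, card_erase_of_mem hmem]
            by_cases hh : HH G X x y
            · simp only [hh, if_true]; have := cn_le (X := X) htri hxy; omega
            · simp only [hh, if_false]
              by_contra hc
              exact hh ⟨hxy, by omega⟩
      _ ≤ _ := by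
            rw [sum_boole, Nat.cast_id]
            gcongr
            exact erase_subset _ _
  have hsub : insert u (L.biUnion fun x => (nbs G X x).erase u) ⊆ Nb G X S := by
    intro z hz
    rw [mem_insert] at hz
    rcases hz with rfl | hz
    · obtain ⟨x, hx⟩ := card_pos.1 hpos
      exact mem_biUnion.2 ⟨x, (mem_inter.1 hx).1, hu x hx⟩
    · obtain ⟨x, hx, hz⟩ := mem_biUnion.1 hz
      exact mem_biUnion.2 ⟨x, (mem_inter.1 hx).1, mem_of_mem_erase hz⟩
  have hc := card_le_card hsub
  rw [card_insert_of_notMem (by simp)] at hc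
  rw [hA] at h
  have : 2 * ((ES G X).card - 1) * L.card = 2 * (((ES G X).card - 1) * L.card) := by ring
  rw [this]
  omega

theorem mem_nbs_sign {X : Finset V} {x z : Perm V} (h : z ∈ nbs G X x) : Perm.sign z = - Perm.sign x := by
  obtain ⟨t, ht, rfl⟩ := mem_nbs.1 h
  rw [Perm.sign_mul, ES_sign ht]; simp

theorem nb_split (X : Finset V) (R : Finset (Perm V)) {e : ℤˣ} :
    (Nb G X (R.filter fun h => Perm.sign h = e) \ (R.filter fun h => Perm.sign h = -e)).card +
    (Nb G X (R.filter fun h => Perm.sign h = -e) \ (R.filter fun h => Perm.sign h = e)).card ≤ (nb G X R).card := by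
  rw [← card_union_of_disjoint]
  · apply card_le_card
    have aux : ∀ e : ℤˣ, (Nb G X (R.filter fun h => Perm.sign h = e) \ (R.filter fun h => Perm.sign h = -e)) ⊆ nb G X R := by
      intro e z hz
      rw [mem_sdiff] at hz
      obtain ⟨x, hx, hzx⟩ := mem_biUnion.1 hz.1
      rw [mem_filter] at hx
      obtain ⟨t, ht, e1⟩ := mem_nbs.1 hzx
      refine mem_nb.2 ⟨⟨x, hx.1, t, ht, e1⟩, fun hzR => hz.2 (mem_filter.2 ⟨hzR, ?_⟩)⟩
      rw [mem_nbs_sign hzx, hx.2]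
    apply union_subset (aux e)
    have := aux (-e)
    rwa [neg_neg] at this
  · rw [disjoint_left]
    intro z hz hz2
    rw [mem_sdiff] at hz hz2
    obtain ⟨x, hx, hzx⟩ := mem_biUnion.1 hz.1
    obtain ⟨y, hy, hzy⟩ := mem_biUnion.1 hz2.1
    rw [mem_filter] at hx hy
    have h1 := mem_nbs_sign hzx
    have h2 := mem_nbs_sign hzy
    rw [h1, hx.2, hy.2] at h2
    rcases Int.units_eq_one_or e with h | h <;> rw [h] at h2 <;> exact absurd h2 (by decide)

theorem card_split (R : Finset (Perm V)) (e : ℤˣ) :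
    (R.filter fun h => Perm.sign h = e).card + (R.filter fun h => Perm.sign h = -e).card = R.card := by
  rw [← card_filter_add_card_filter_not (s := R) (fun h => Perm.sign h = e)]
  congr 2
  apply filter_congr
  intro h _
  rcases Int.units_eq_one_or e with h1 | h1 <;> rcases Int.units_eq_one_or (Perm.sign h) with h2 | h2 <;> rw [h1, h2] <;> decide

/-- the numerical content for small ground sets -/
theorem locS {X : Finset V} (hX : X.card ≤ 5) (htri : Tri G) (R : Finset (Perm V)) {d : ℕ} (hd : (ES G X).card = d) :
   ∃ m0 m1 q0 q1 t : ℕ, m1 ≤ m0 ∧ m0 + m1 = R.card ∧ t ≤ m0 ∧ t ≤ d ∧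
    2 * (d * m0) ≤ 2 * q0 + m0 * (m0 - 1) + m0 * m0 / 2 ∧ 4 * (d * m0) ≤ 6 * q0 + m0 * (m0 - 1) + m0 * m0 / 2 ∧
    2 * (d * m1) ≤ 2 * q1 + m1 * (m1 - 1) + m1 * m1 / 2 ∧ 4 * (d * m1) ≤ 6 * q1 + m1 * (m1 - 1) + m1 * m1 / 2 ∧
    q0 + q1 ≤ (nb G X R).card + m0 + m1 ∧ (m1 = 0 → q0 ≤ (nb G X R).card) ∧
    (m1 = 1 → (t = 0 → q0 + d ≤ (nb G X R).card) ∧ (1 ≤ t → q0 + d ≤ (nb G X R).card + t + 1 ∧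
        2 + 2 * (d - 1) * t ≤ 2 * q0 + t * t / 2)) := by
  obtain ⟨e, he⟩ : ∃ e : ℤˣ, (R.filter fun h => Perm.sign h = -e).card ≤ (R.filter fun h => Perm.sign h = e).card := by
    rcases le_total (R.filter fun h => Perm.sign h = -1).card (R.filter fun h => Perm.sign h = 1).card with h | h
    · exact ⟨1, h⟩
    · exact ⟨-1, by rwa [neg_neg]⟩
  have hs := nb_split (G := G) X R (e := e)
  have hc := card_split R e
  set R0 := R.filter fun h => Perm.sign h = e with hR0
  set R1 := R.filter fun h => Perm.sign h = -e with hR1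
  have p0 := phi hX htri R0
  have p1 := phi hX htri R1
  rw [hd] at p0 p1
  have g1 : (Nb G X R0).card ≤ (Nb G X R0 \ R1).card + R1.card := by
    have := le_card_sdiff R1 (Nb G X R0); omega
  have g2 : (Nb G X R1).card ≤ (Nb G X R1 \ R0).card + R0.card := by
    have := le_card_sdiff R0 (Nb G X R1); omega
  by_cases h1 : R1.card = 1
  · obtain ⟨u, hu⟩ := card_eq_one.1 h1
    have st := star hX htri R0 u
    have hNu : Nb G X R1 = nbs G X u := by rw [hu]; simp [Nb]
    have cu : (nbs G X u).card = d := by rw [card_nbs, hd]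
    have e1 : (Nb G X R1 \ R0).card + (R0 ∩ nbs G X u).card = d := by
      rw [hNu, inter_comm, card_sdiff_add_card_inter, cu]
    refine ⟨R0.card, R1.card, (Nb G X R0).card, (Nb G X R1).card, (R0 ∩ nbs G X u).card, he, hc, card_le_card inter_subset_left,
      by omega, p0.1, p0.2, p1.1, p1.2, by omega, by omega, ?_⟩
    intro _
    refine ⟨?_, ?_⟩
    · intro ht
      have : Nb G X R0 \ R1 = Nb G X R0 := by
        rw [Finset.sdiff_eq_self_iff_disjoint, hu, disjoint_singleton_right]
        intro hm
        obtain ⟨x, hx, hx2⟩ := mem_biUnion.1 hm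
        have : x ∈ R0 ∩ nbs G X u := mem_inter.2 ⟨hx, mem_nbs_symm hx2⟩
        rw [card_eq_zero.1 ht] at this
        simp at this
      rw [this] at hs
      omega
    · intro ht
      rw [hd] at st
      exact ⟨by omega, st ht⟩
  · refine ⟨R0.card, R1.card, (Nb G X R0).card, (Nb G X R1).card, 0, he, hc, by omega, by omega,
      p0.1, p0.2, p1.1, p1.2, by omega, ?_, fun h => absurd h h1⟩
    intro h0
    omega

theorem LOC4 {X : Finset V} (hX : X.card ≤ 5) (htri : Tri G) (hd : (ES G X).card = 4) (R : Finset (Perm V))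
    (h1 : 4 ≤ R.card) (h2 : R.card ≤ 6) : 8 ≤ (nb G X R).card := by
  obtain ⟨m0, m1, q0, q1, t, a1, a2, a3, a4, a5, a6, a7, a8, a9, a10, a11⟩ := locS hX htri R hd
  have : m0 ≤ 6 := by omega
  have : m1 ≤ 3 := by omega
  generalize (nb G X R).card = N at *
  interval_cases m1 <;> interval_cases m0 <;> first | omega | (interval_cases t <;> omega)

theorem LOC5 {X : Finset V} (hX : X.card ≤ 5) (htri : Tri G) (hd : (ES G X).card = 5) (R : Finset (Perm V))
    (h1 : 5 ≤ R.card) (h2 : R.card ≤ 9) : 12 ≤ (nb G X R).card := by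
  obtain ⟨m0, m1, q0, q1, t, a1, a2, a3, a4, a5, a6, a7, a8, a9, a10, a11⟩ := locS hX htri R hd
  have : m0 ≤ 9 := by omega
  have : m1 ≤ 4 := by omega
  generalize (nb G X R).card = N at *
  interval_cases m1 <;> interval_cases m0 <;> first | omega | (interval_cases t <;> omega)

end UG

namespace UG
open Equiv Finset
set_option linter.unusedSectionVars false
set_option linter.unusedVariables false
variable {V : Type*} [Fintype V] [DecidableEq V] {G : SimpleGraph V} [DecidableRel G.Adj]

/-- block of permutations agreeing with `g` off `X` -/
def Blk (X : Finset V) (g : Perm V) : Finset (Perm V) := univ.filter fun h => ∀ v, v ∉ X → h v = g v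

theorem mem_Blk {X : Finset V} {g h : Perm V} : h ∈ Blk X g ↔ ∀ v, v ∉ X → h v = g v := by simp [Blk]

theorem Blk_mul {X : Finset V} {g h t : Perm V} (hh : h ∈ Blk X g) (ht : t ∈ ES G X) : h * t ∈ Blk X g := by
  rw [mem_Blk] at *
  intro v hv
  rw [Perm.mul_apply, ES_fix ht hv, hh v hv]

theorem card_Blk (X : Finset V) (g : Perm V) : (Blk X g).card = X.card.factorial := by
  have e1 : (Blk X g).card = (Blk X (1 : Perm V)).card := by
    have : Blk X g = (Blk X (1 : Perm V)).image (fun h => g * h) := by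
      ext h
      rw [mem_image]
      constructor
      · intro hh
        refine ⟨g⁻¹ * h, ?_, by simp⟩
        rw [mem_Blk] at *
        intro v hv
        rw [Perm.mul_apply, hh v hv]; simp
      · rintro ⟨p, hp, rfl⟩
        rw [mem_Blk] at *
        intro v hv
        rw [Perm.mul_apply, hp v hv]; simp
    rw [this, card_image_of_injective _ (mul_right_injective g)]
  rw [e1]
  have e2 := Fintype.card_congr (Perm.subtypeEquivSubtypePerm (fun v => v ∈ X))
  rw [Fintype.card_perm, Fintype.card_coe] at e2
  rw [e2, Fintype.card_subtype]
  congr 1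

theorem Blk_eq {X : Finset V} {g h : Perm V} (hh : h ∈ Blk X g) : Blk X h = Blk X g := by
  ext p
  rw [mem_Blk] at *
  rw [mem_Blk]
  constructor
  · intro hp v hv; rw [hp v hv, hh v hv]
  · intro hp v hv; rw [hp v hv, hh v hv]

theorem Blk_val {X : Finset V} {g h : Perm V} (hh : h ∈ Blk X g) {v : V} (hv : v ∈ X) : h v ∈ X.image g := by
  rw [mem_Blk] at hh
  by_contra hcon
  have : g⁻¹ (h v) ∉ X := fun hm => hcon (mem_image.2 ⟨_, hm, by simp⟩)
  have h2 : h (g⁻¹ (h v)) = h v := by rw [hh _ this]; simp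
  rw [h.injective h2] at this
  exact this hv

theorem Blk_filter {X : Finset V} {k : V} (hk : k ∉ X) {g : Perm V} {j : V} (hj : j ∈ (insert k X).image g) :
    ∃ h0 ∈ Blk (insert k X) g, h0 k = j ∧ (Blk (insert k X) g).filter (fun h => h k = j) = Blk X h0 := by
  obtain ⟨w, hw, rfl⟩ := mem_image.1 hj
  have hb : g * swap k w ∈ Blk (insert k X) g := by
    rw [mem_Blk]
    intro v hv
    have h1 : v ≠ k := by rintro rfl; exact hv (mem_insert_self _ _)
    have h2 : v ≠ w := by rintro rfl; exact hv hw
    rw [Perm.mul_apply, swap_apply_of_ne_of_ne h1 h2]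
  have hbk : (g * swap k w) k = g w := by simp
  refine ⟨_, hb, hbk, ?_⟩
  ext h
  rw [mem_filter, mem_Blk, mem_Blk]
  rw [mem_Blk] at hb
  constructor
  · rintro ⟨h1, h2⟩ v hv
    by_cases hvk : v = k
    · subst hvk; rw [h2, hbk]
    · have : v ∉ insert k X := by simp [hvk, hv]
      rw [h1 v this, hb v this]
  · intro h1
    refine ⟨?_, by rw [h1 k hk, hbk]⟩
    intro v hv
    rw [h1 v (fun h => hv (mem_insert_of_mem h)), hb v hv]

theorem Blk_two {X : Finset V} {k i : V} (hk : k ∉ X) (hi : i ∈ X) {g : Perm V} {u v : V}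
    (hu : u ∈ (insert k X).image g) (hv : v ∈ (insert k X).image g) (huv : u ≠ v) :
    ((Blk (insert k X) g).filter (fun h => h k = u ∧ h i = v)).card = (X.card - 1).factorial := by
  obtain ⟨h0, hb, hk0, e⟩ := Blk_filter hk hu
  rw [← filter_filter, e]
  have hX : insert i (X.erase i) = X := insert_erase hi
  have hv2 : v ∈ (insert i (X.erase i)).image h0 := by
    rw [hX]
    obtain ⟨w, hw, rfl⟩ := mem_image.1 hv
    -- g w is attained by h0 on insert k X
    have h1 : g ∈ Blk (insert k X) h0 := by
      rw [mem_Blk] at hb ⊢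
      intro v hv; rw [hb v hv]
    obtain ⟨w', hw', e'⟩ := mem_image.1 (Blk_val h1 hw)
    rw [mem_insert] at hw'
    rcases hw' with rfl | hw'
    · rw [hk0] at e'; exact absurd e' huv
    · exact mem_image.2 ⟨w', hw', e'⟩
  have := Blk_filter (X := X.erase i) (k := i) (notMem_erase i X) hv2
  rw [hX] at this
  obtain ⟨h1, -, -, e1⟩ := this
  rw [e1, card_Blk, card_erase_of_mem hi]

/-- a separation of a block -/
structure Sep (G : SimpleGraph V) [DecidableRel G.Adj] (Y : Finset V) (g : Perm V) (A B : Finset (Perm V)) : Prop where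
  hA : A ⊆ Blk Y g
  hB : B ⊆ Blk Y g
  disj : Disjoint A B
  ne : ∀ a ∈ A, ∀ t ∈ ES G Y, a * t ∉ B

theorem Sep.symm {Y : Finset V} {g : Perm V} {A B : Finset (Perm V)} (h : Sep G Y g A B) : Sep G Y g B A := by
  refine ⟨h.hB, h.hA, h.disj.symm, fun b hb t ht hbt => ?_⟩
  have := h.ne _ hbt t ht
  rw [mul_assoc, ES_sq ht, mul_one] at this
  exact this hb

/-- cut property -/
def Cut (G : SimpleGraph V) [DecidableRel G.Adj] (X : Finset V) (N β : ℕ) : Prop :=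
  ∀ g A B, Sep G X g A B → (Blk X g \ (A ∪ B)).card ≤ N → A.card ≤ β ∨ B.card ≤ β

theorem Sep.nb_sub {Y : Finset V} {g : Perm V} {A B : Finset (Perm V)} (h : Sep G Y g A B) :
    nb G Y B ⊆ Blk Y g \ (A ∪ B) := by
  intro z hz
  obtain ⟨⟨r, hr, t, ht, rfl⟩, h2⟩ := mem_nb.1 hz
  rw [mem_sdiff, mem_union, not_or]
  exact ⟨Blk_mul (h.hB hr) ht, h.symm.ne r hr t ht, h2⟩

/-- restriction to a copy -/
theorem Sep.copy {X : Finset V} {k : V} (hk : k ∉ X) {g : Perm V} {A B : Finset (Perm V)} (h : Sep G (insert k X) g A B)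
    {j : V} (hj : j ∈ (insert k X).image g) : ∃ h0, Sep G X h0 (A.filter fun h => h k = j) (B.filter fun h => h k = j) ∧
    Blk X h0 \ (A.filter (fun h => h k = j) ∪ B.filter fun h => h k = j) =
      (Blk (insert k X) g \ (A ∪ B)).filter fun h => h k = j := by
  obtain ⟨h0, hb, hk0, e⟩ := Blk_filter hk hj
  refine ⟨h0, ⟨?_, ?_, ?_, ?_⟩, ?_⟩
  · rw [← e]; exact filter_subset_filter _ h.hA
  · rw [← e]; exact filter_subset_filter _ h.hB
  · exact disjoint_filter_filter h.disj
  · intro a ha t ht hab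
    exact h.ne a (mem_filter.1 ha).1 t (ES_mono (subset_insert _ _) ht) (mem_filter.1 hab).1
  · rw [← e, ← filter_union]
    ext z; simp only [mem_sdiff, mem_filter]; tauto

/-- numerical data of a configuration -/
structure Cfg (n N' β' d' : ℕ) (J : Finset V) (a α b : V → ℕ) : Prop where
  card : J.card = n
  cut : ∀ j ∈ J, a j ≤ N' → α j ≤ β' ∨ b j ≤ β'
  locb : ∀ j ∈ J, 1 ≤ b j → 2 * b j * d' + 2 ≤ 2 * a j + b j * (b j + 1)
  loca : ∀ j ∈ J, 1 ≤ α j → 2 * α j * d' + 2 ≤ 2 * a j + α j * (α j + 1)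
  type : ∀ J0 ⊆ J, ∑ j ∈ J \ J0, (a j + min (α j) (b j)) < (n - J0.card - 1) * (n - 2).factorial →
    (∀ j ∈ J \ J0, b j ≤ α j) ∨ (∀ j ∈ J \ J0, α j ≤ b j)
  extb : ∀ j ∈ J, b j ≤ ∑ x ∈ J.erase j, (a x + b x)
  exta : ∀ j ∈ J, α j ≤ ∑ x ∈ J.erase j, (a x + α x)

theorem Cfg.symm {n N' β' d' : ℕ} {J : Finset V} {a α b : V → ℕ} (h : Cfg n N' β' d' J a α b) : Cfg n N' β' d' J a b α := by
  refine ⟨h.card, fun j hj hh => (h.cut j hj hh).symm, h.loca, h.locb, ?_, h.exta, h.extb⟩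
  intro J0 hJ0 hh
  simp only [min_comm (b _)] at hh
  exact (h.type J0 hJ0 hh).symm

section
variable {X : Finset V} {k i : V} {g : Perm V} {A B : Finset (Perm V)}

theorem fib_le (Z W : Finset (Perm V)) (I : Finset V) (k : V) :
    ((Z ∪ W).filter fun h => h k ∈ I).card ≤
      ∑ j ∈ I, ((Z.filter fun h => h k = j).card + (W.filter fun h => h k = j).card) := by
  rw [card_eq_sum_card_fiberwise (f := fun h : Perm V => h k) (t := I)]
  · refine sum_le_sum fun j hj => ?_
    refine le_trans ?_ (card_union_le _ _)
    apply card_le_card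
    intro z hz
    simp only [mem_filter, mem_union] at *
    tauto
  · intro z hz
    simp only [coe_filter, Set.mem_ofPred_eq] at hz
    exact hz.2

theorem Sep.mulB (h : Sep G (insert k X) g A B) {b t : Perm V} (hb : b ∈ B) (ht : t ∈ ES G (insert k X)) :
    b * t ∈ (Blk (insert k X) g \ (A ∪ B)) ∪ B := by
  by_cases h1 : b * t ∈ B
  · exact mem_union_right _ h1
  · apply mem_union_left
    rw [mem_sdiff, mem_union, not_or]
    exact ⟨Blk_mul (h.hB hb) ht, h.symm.ne b hb t ht, h1⟩

theorem Sep.ext (hi : i ∈ X) (hki : G.Adj k i) (h : Sep G (insert k X) g A B) (j : V) :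
    (B.filter fun h => h k = j).card ≤ ∑ x ∈ ((insert k X).image g).erase j,
      (((Blk (insert k X) g \ (A ∪ B)).filter fun h => h k = x).card + (B.filter fun h => h k = x).card) := by
  refine le_trans ?_ (fib_le _ _ _ _)
  have hs : swap k i ∈ ES G (insert k X) := mem_ES.2 ⟨k, by simp, i, by simp [hi], hki, rfl⟩
  rw [← card_image_of_injective _ (mul_left_injective (swap k i))]
  apply card_le_card
  intro z hz
  obtain ⟨b, hb, rfl⟩ := mem_image.1 hz
  rw [mem_filter] at hb
  rw [mem_filter]
  refine ⟨h.mulB hb.1 hs, ?_⟩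
  simp only [Perm.mul_apply, swap_apply_left]
  rw [mem_erase]
  refine ⟨?_, Blk_val (h.hB hb.1) (mem_insert_of_mem hi)⟩
  rw [← hb.2]
  exact fun e => hki.ne (b.injective e.symm)

theorem Sep.ext2 {i' : V} (hi : i ∈ X) (hi' : i' ∈ X) (hne : i ≠ i') (hki : G.Adj k i) (hki' : G.Adj k i')
    (h : Sep G (insert k X) g A B) (j : V) :
    2 * (B.filter fun h => h k = j).card ≤ ∑ x ∈ ((insert k X).image g).erase j,
      (((Blk (insert k X) g \ (A ∪ B)).filter fun h => h k = x).card + (B.filter fun h => h k = x).card) := by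
  refine le_trans ?_ (fib_le _ _ _ _)
  have hs : swap k i ∈ ES G (insert k X) := mem_ES.2 ⟨k, by simp, i, by simp [hi], hki, rfl⟩
  have hs' : swap k i' ∈ ES G (insert k X) := mem_ES.2 ⟨k, by simp, i', by simp [hi'], hki', rfl⟩
  have hd : Disjoint ((B.filter fun h => h k = j).image fun r => r * swap k i) ((B.filter fun h => h k = j).image fun r => r * swap k i') := by
    rw [disjoint_left]
    intro z hz hz'
    obtain ⟨y, hy, rfl⟩ := mem_image.1 hz
    obtain ⟨x, hx, e⟩ := mem_image.1 hz'
    rw [mem_filter] at hx hy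
    obtain ⟨v1, v2, v3⟩ := c2vals hki.ne hki'.ne hne e.symm
    rw [hy.2, ← hx.2] at v2
    exact hki.ne (x.injective v2)
  have e2 : 2 * (B.filter fun h => h k = j).card = (((B.filter fun h => h k = j).image fun r => r * swap k i) ∪ ((B.filter fun h => h k = j).image fun r => r * swap k i')).card := by
    rw [card_union_of_disjoint hd, card_image_of_injective _ (mul_left_injective _), card_image_of_injective _ (mul_left_injective _), two_mul]
  rw [e2]
  apply card_le_card
  apply union_subset
  · intro z hz
    obtain ⟨b, hb, rfl⟩ := mem_image.1 hz
    rw [mem_filter] at hb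
    rw [mem_filter]
    refine ⟨h.mulB hb.1 hs, ?_⟩
    simp only [Perm.mul_apply, swap_apply_left]
    rw [mem_erase]
    refine ⟨?_, Blk_val (h.hB hb.1) (mem_insert_of_mem hi)⟩
    rw [← hb.2]
    exact fun e => hki.ne (b.injective e.symm)
  · intro z hz
    obtain ⟨b, hb, rfl⟩ := mem_image.1 hz
    rw [mem_filter] at hb
    rw [mem_filter]
    refine ⟨h.mulB hb.1 hs', ?_⟩
    simp only [Perm.mul_apply, swap_apply_left]
    rw [mem_erase]
    refine ⟨?_, Blk_val (h.hB hb.1) (mem_insert_of_mem hi')⟩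
    rw [← hb.2]
    exact fun e => hki'.ne (b.injective e.symm)

theorem Sep.ext3 {i' : V} (hi : i ∈ X) (hi' : i' ∈ X) (hne : i ≠ i') (hki : G.Adj k i) (hki' : G.Adj k i')
    (h : Sep G (insert k X) g A B) (j j1 : V) (hj : j ≠ j1) :
    (B.filter fun h => h k = j).card ≤ ∑ x ∈ (((insert k X).image g).erase j).erase j1,
      (((Blk (insert k X) g \ (A ∪ B)).filter fun h => h k = x).card + (B.filter fun h => h k = x).card) := by
  refine le_trans ?_ (fib_le _ _ _ _)
  have hs : swap k i ∈ ES G (insert k X) := mem_ES.2 ⟨k, by simp, i, by simp [hi], hki, rfl⟩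
  have hs' : swap k i' ∈ ES G (insert k X) := mem_ES.2 ⟨k, by simp, i', by simp [hi'], hki', rfl⟩
  have inj : Set.InjOn (fun x : Perm V => if x i ≠ j1 then x * swap k i else x * swap k i') (B.filter fun h => h k = j : Finset (Perm V)) := by
    intro x hx y hy e
    rw [mem_coe, mem_filter] at hx hy
    by_cases h : x i ≠ j1 <;> by_cases h' : y i ≠ j1 <;> simp only [h, h', if_true, if_false, ne_eq, not_false_eq_true] at e
    · exact mul_right_cancel e
    · obtain ⟨v1, v2, v3⟩ := c2vals hki.ne hki'.ne hne e
      exact absurd (by rw [← v2, hx.2]; exact hj) h'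
    · obtain ⟨v1, v2, v3⟩ := c2vals hki.ne hki'.ne hne e.symm
      exact absurd (by rw [← v2, hy.2]; exact hj) h
    · exact mul_right_cancel e
  rw [← card_image_of_injOn inj]
  apply card_le_card
  intro z hz
  obtain ⟨b, hb, rfl⟩ := mem_image.1 hz
  rw [mem_filter] at hb
  rw [mem_filter, mem_erase, mem_erase]
  by_cases hc : b i ≠ j1
  · simp only [hc, if_true, ne_eq, not_false_eq_true]
    refine ⟨h.mulB hb.1 hs, ?_⟩
    simp only [Perm.mul_apply, swap_apply_left]
    refine ⟨hc, ?_, Blk_val (h.hB hb.1) (mem_insert_of_mem hi)⟩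
    rw [← hb.2]
    exact fun e => hki.ne (b.injective e.symm)
  · simp only [hc, if_false]
    push Not at hc
    refine ⟨h.mulB hb.1 hs', ?_⟩
    simp only [Perm.mul_apply, swap_apply_left]
    refine ⟨?_, ?_, Blk_val (h.hB hb.1) (mem_insert_of_mem hi')⟩
    · rw [← hc]; exact fun e => hne (b.injective e.symm)
    · rw [← hb.2]; exact fun e => hki'.ne (b.injective e.symm)

theorem Sep.M_le (hk : k ∉ X) (hi : i ∈ X) (hki : G.Adj k i) (h : Sep G (insert k X) g A B) (I I' : Finset V)
    (hI : I ⊆ (insert k X).image g) (hI' : I' ⊆ (insert k X).image g) (hd : Disjoint I I') :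
    I.card * I'.card * (X.card - 1).factorial ≤
      ∑ j ∈ I, (((Blk (insert k X) g \ (A ∪ B)).filter fun h => h k = j).card + (B.filter fun h => h k = j).card) +
      ∑ j ∈ I', (((Blk (insert k X) g \ (A ∪ B)).filter fun h => h k = j).card + (A.filter fun h => h k = j).card) := by
  have hs : swap k i ∈ ES G (insert k X) := mem_ES.2 ⟨k, by simp, i, by simp [hi], hki, rfl⟩
  set M := (Blk (insert k X) g).filter fun h => h k ∈ I ∧ h i ∈ I' with hM
  have hMc : M.card = I.card * I'.card * (X.card - 1).factorial := by
    rw [card_eq_sum_card_fiberwise (f := fun h : Perm V => (h k, h i)) (t := I ×ˢ I')]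
    · rw [sum_congr rfl (g := fun _ => (X.card - 1).factorial), sum_const, card_product, smul_eq_mul]
      rintro ⟨u, v⟩ huv
      rw [mem_product] at huv
      have huv2 : u ≠ v := fun e => disjoint_left.1 hd huv.1 (by rw [show u = v from e]; exact huv.2)
      rw [← Blk_two hk hi (hI huv.1) (hI' huv.2) huv2]
      congr 1
      ext z
      simp only [hM, mem_filter, Prod.mk.injEq]
      constructor
      · rintro ⟨⟨h1, -⟩, h2⟩; exact ⟨h1, h2⟩
      · rintro ⟨h1, h2⟩; exact ⟨⟨h1, by rw [h2.1]; exact huv.1, by rw [h2.2]; exact huv.2⟩, h2⟩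
    · intro z hz
      simp only [hM, coe_filter, Set.mem_ofPred_eq] at hz
      simp only [coe_product, Set.mem_prod, mem_coe]
      exact hz.2
  rw [← hMc]
  have hsub : M ⊆ (((Blk (insert k X) g \ (A ∪ B)) ∪ B).filter fun h => h k ∈ I) ∪
      ((((Blk (insert k X) g \ (A ∪ B)) ∪ A).filter fun h => h k ∈ I').image fun r => r * swap k i) := by
    intro z hz
    rw [hM, mem_filter] at hz
    by_cases hzA : z ∈ A
    · apply mem_union_right
      refine mem_image.2 ⟨z * swap k i, ?_, by rw [mul_assoc, swap_mul_self, mul_one]⟩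
      rw [mem_filter]
      refine ⟨?_, by simpa using hz.2.2⟩
      have := h.symm.mulB hzA hs
      rwa [union_comm B A] at this
    · apply mem_union_left
      rw [mem_filter]
      refine ⟨?_, hz.2.1⟩
      by_cases hzB : z ∈ B
      · exact mem_union_right _ hzB
      · apply mem_union_left; rw [mem_sdiff, mem_union]; tauto
  refine (card_le_card hsub).trans ((card_union_le _ _).trans ?_)
  rw [card_image_of_injective _ (mul_left_injective _)]
  exact add_le_add (fib_le _ _ _ _) (fib_le _ _ _ _)

theorem Sep.cfg (hk : k ∉ X) (hi : i ∈ X) (hki : G.Adj k i) {N' β' d' : ℕ} (hC : Cut G X N' β') (hL : Loc G X d')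
    (h : Sep G (insert k X) g A B) :
    Cfg (X.card + 1) N' β' d' ((insert k X).image g)
      (fun j => ((Blk (insert k X) g \ (A ∪ B)).filter fun h => h k = j).card)
      (fun j => (A.filter fun h => h k = j).card) (fun j => (B.filter fun h => h k = j).card) := by
  have locb : ∀ A B, Sep G (insert k X) g A B → ∀ j ∈ (insert k X).image g, 1 ≤ (B.filter fun h => h k = j).card →
      2 * (B.filter fun h => h k = j).card * d' + 2 ≤ 2 * ((Blk (insert k X) g \ (A ∪ B)).filter fun h => h k = j).card +
        (B.filter fun h => h k = j).card * ((B.filter fun h => h k = j).card + 1) := by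
    intro A B h j hj h1
    obtain ⟨h0, hS, e⟩ := h.copy hk hj
    have h2 := card_le_card hS.nb_sub
    rw [e] at h2
    have := hL _ (card_pos.1 h1)
    omega
  have comm : Blk (insert k X) g \ (B ∪ A) = Blk (insert k X) g \ (A ∪ B) := by rw [union_comm]
  refine ⟨?_, ?_, locb A B h, ?_, ?_, fun j hj => h.ext hi hki j, ?_⟩
  · rw [card_image_of_injective _ g.injective, card_insert_of_notMem hk]
  · intro j hj ha
    obtain ⟨h0, hS, e⟩ := h.copy hk hj
    exact hC h0 _ _ hS (by rw [e]; exact ha)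
  · have := locb B A h.symm
    rwa [comm] at this
  · intro J0 hJ0 hlt
    by_contra hcon
    push Not at hcon
    obtain ⟨⟨j1, hj1, h1⟩, ⟨j2, hj2, h2⟩⟩ := hcon
    set J := (insert k X).image g
    set I := (J \ J0).filter fun j => (B.filter fun h => h k = j).card ≤ (A.filter fun h => h k = j).card with hI
    set I' := (J \ J0).filter fun j => ¬ (B.filter fun h => h k = j).card ≤ (A.filter fun h => h k = j).card with hI'
    have hM := h.M_le hk hi hki I I' ((filter_subset _ _).trans sdiff_subset) ((filter_subset _ _).trans sdiff_subset)
      (disjoint_filter_filter_not _ _ _)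
    have hc : I.card + I'.card = J.card - J0.card := by
      rw [← card_sdiff_of_subset hJ0]; exact card_filter_add_card_filter_not _
    have hJ : J.card = X.card + 1 := by
      rw [card_image_of_injective _ g.injective, card_insert_of_notMem hk]
    have p1 : 1 ≤ I.card := card_pos.2 ⟨j2, mem_filter.2 ⟨hj2, h2.le⟩⟩
    have p2 : 1 ≤ I'.card := card_pos.2 ⟨j1, mem_filter.2 ⟨hj1, not_le.2 h1⟩⟩
    rw [← sum_filter_add_sum_filter_not (J \ J0) (fun j => (B.filter fun h => h k = j).card ≤ (A.filter fun h => h k = j).card)] at hlt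
    rw [← hI, ← hI'] at hlt
    have s1 : ∑ j ∈ I, (((Blk (insert k X) g \ (A ∪ B)).filter fun h => h k = j).card + (B.filter fun h => h k = j).card) =
        ∑ j ∈ I, (((Blk (insert k X) g \ (A ∪ B)).filter fun h => h k = j).card + min (A.filter fun h => h k = j).card (B.filter fun h => h k = j).card) := by
      refine sum_congr rfl fun j hj => ?_
      rw [min_eq_right (mem_filter.1 hj).2]
    have s2 : ∑ j ∈ I', (((Blk (insert k X) g \ (A ∪ B)).filter fun h => h k = j).card + (A.filter fun h => h k = j).card) =
        ∑ j ∈ I', (((Blk (insert k X) g \ (A ∪ B)).filter fun h => h k = j).card + min (A.filter fun h => h k = j).card (B.filter fun h => h k = j).card) := by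
      refine sum_congr rfl fun j hj => ?_
      rw [min_eq_left (not_le.1 (mem_filter.1 hj).2).le]
    rw [s1, s2] at hM
    have h3 := lt_of_le_of_lt hM hlt
    rw [show X.card + 1 - 2 = X.card - 1 by omega] at h3
    have h4 := lt_of_mul_lt_mul_right h3 (Nat.zero_le _)
    have h5 : I.card + I'.card ≤ I.card * I'.card + 1 := by nlinarith
    omega
  · intro j hj
    have := h.symm.ext hi hki j
    rwa [comm] at this

theorem cls_sum {Y : Finset V} {k : V} (hkY : k ∈ Y) (Z : Finset (Perm V)) (hZ : Z ⊆ Blk Y g) :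
    ∑ j ∈ Y.image g, (Z.filter fun h => h k = j).card = Z.card := by
  symm
  apply card_eq_sum_card_fiberwise
  intro z hz
  exact Blk_val (hZ hz) hkY

end

end UG

namespace UG
open Equiv Finset
set_option linter.unusedSectionVars false
set_option linter.unusedVariables false
variable {V : Type*} [Fintype V] [DecidableEq V] {G : SimpleGraph V} [DecidableRel G.Adj]

theorem Cfg.small {n N' β' d' : ℕ} {J : Finset V} {a α b : V → ℕ} (c : Cfg n N' β' d' J a α b) {j : V} (hj : j ∈ J)
    (h : a j ≤ N') : min (α j) (b j) ≤ β' ∧ (1 ≤ min (α j) (b j) →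
      2 * min (α j) (b j) * d' + 2 ≤ 2 * a j + min (α j) (b j) * (min (α j) (b j) + 1)) := by
  constructor
  · rcases c.cut j hj h with h | h
    · exact (min_le_left _ _).trans h
    · exact (min_le_right _ _).trans h
  · rcases min_choice (α j) (b j) with e | e
    · rw [e]; exact c.loca j hj
    · rw [e]; exact c.locb j hj

/-- sum bound from pointwise linear bounds -/
theorem wsum {S : Finset V} {a s : V → ℕ} {p q N M : ℕ} (h : ∀ j ∈ S, p * s j ≤ q * a j) (hN : ∑ j ∈ S, a j ≤ N)
    (h0 : q * N < p * (M + 1)) : ∑ j ∈ S, s j ≤ M := by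
  have h1 : p * ∑ j ∈ S, s j ≤ q * ∑ j ∈ S, a j := by
    rw [mul_sum, mul_sum]; exact sum_le_sum h
  have h2 : q * ∑ j ∈ S, a j ≤ q * N := Nat.mul_le_mul_left _ hN
  by_contra hc
  push Not at hc
  have h3 : p * (M + 1) ≤ p * ∑ j ∈ S, s j := Nat.mul_le_mul_left _ hc
  omega

theorem Cfg.sumb {J S : Finset V} {α b : V → ℕ} (h : ∀ j ∈ S, b j ≤ α j) : ∑ j ∈ S, b j = ∑ j ∈ S, min (α j) (b j) :=
  sum_congr rfl fun j hj => (min_eq_right (h j hj)).symm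

/-- no bad index -/
theorem Cfg.zero {n N' β' d' : ℕ} {J : Finset V} {a α b : V → ℕ} (c : Cfg n N' β' d' J a α b) {N p q M : ℕ}
    (hN : ∑ j ∈ J, a j ≤ N)
    (H0 : ∀ x s, x ≤ N' → s ≤ β' → (1 ≤ s → 2 * s * d' + 2 ≤ 2 * x + s * (s + 1)) → p * s ≤ q * x)
    (h0 : q * N < p * (M + 1)) (ht0 : N + M < (n - 1) * (n - 2).factorial) (hb : ∀ j ∈ J, a j ≤ N') :
    ∑ j ∈ J, α j ≤ M ∨ ∑ j ∈ J, b j ≤ M := by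
  have hs : ∑ j ∈ J, min (α j) (b j) ≤ M := by
    refine wsum (a := a) (p := p) (q := q) (fun j hj => ?_) hN h0
    exact H0 _ _ (hb j hj) (c.small hj (hb j hj)).1 (c.small hj (hb j hj)).2
  have ht := c.type ∅ (empty_subset _) (by
    rw [sdiff_empty, sum_add_distrib, card_empty, Nat.sub_zero]; omega)
  rw [sdiff_empty] at ht
  rcases ht with ht | ht
  · right; rw [Cfg.sumb (J := J) ht]; exact hs
  · left; rw [Cfg.sumb (J := J) ht]; simp only [min_comm (b _)]; exact hs

/-- one bad index -/
theorem Cfg.one {n N' β' d' : ℕ} {J : Finset V} {a α b : V → ℕ} (c : Cfg n N' β' d' J a α b) {e p1 q1 M1 : ℕ}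
    {j0 : V} (hj0 : j0 ∈ J)
    (hN : ∑ j ∈ J.erase j0, a j ≤ e) (he : ∀ j ∈ J.erase j0, a j ≤ N')
    (H1 : ∀ x s, x ≤ e → s ≤ β' → (1 ≤ s → 2 * s * d' + 2 ≤ 2 * x + s * (s + 1)) → p1 * s ≤ q1 * x)
    (h1 : q1 * e < p1 * (M1 + 1)) (ht1 : e + M1 < (n - 2) * (n - 2).factorial) :
    (∑ j ∈ J.erase j0, α j ≤ M1 ∧ ∀ j ∈ J.erase j0, α j ≤ b j) ∨ (∑ j ∈ J.erase j0, b j ≤ M1 ∧ ∀ j ∈ J.erase j0, b j ≤ α j) := by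
  have hle : ∀ j ∈ J.erase j0, a j ≤ e := fun j hj => (single_le_sum (fun _ _ => Nat.zero_le _) hj).trans hN
  have hs : ∑ j ∈ J.erase j0, min (α j) (b j) ≤ M1 := by
    refine wsum (a := a) (p := p1) (q := q1) (fun j hj => ?_) hN h1
    have := c.small (mem_of_mem_erase hj) (he j hj)
    exact H1 _ _ (hle j hj) this.1 this.2
  have ht := c.type {j0} (singleton_subset_iff.2 hj0) (by
    rw [sdiff_singleton_eq_erase, sum_add_distrib, card_singleton, show n - 1 - 1 = n - 2 by omega]; omega)
  rw [sdiff_singleton_eq_erase] at ht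
  rcases ht with ht | ht
  · right; rw [Cfg.sumb (J := J) ht]; exact ⟨hs, ht⟩
  · left; rw [Cfg.sumb (J := J) ht]; simp only [min_comm (b _)]; exact ⟨hs, ht⟩

theorem Cfg.leaf {n N' β' d' : ℕ} {J : Finset V} {a α b : V → ℕ} (c : Cfg n N' β' d' J a α b) {N e p q M p1 q1 M1 : ℕ}
    (hN : ∑ j ∈ J, a j ≤ N) (hNe : N = N' + 1 + e) (he : e ≤ N')
    (H0 : ∀ x s, x ≤ N' → s ≤ β' → (1 ≤ s → 2 * s * d' + 2 ≤ 2 * x + s * (s + 1)) → p * s ≤ q * x)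
    (h0 : q * N < p * (M + 1)) (ht0 : N + M < (n - 1) * (n - 2).factorial)
    (H1 : ∀ x s, x ≤ e → s ≤ β' → (1 ≤ s → 2 * s * d' + 2 ≤ 2 * x + s * (s + 1)) → p1 * s ≤ q1 * x)
    (h1 : q1 * e < p1 * (M1 + 1)) (hM1 : e + 2 * M1 ≤ M) (ht1 : e + M1 < (n - 2) * (n - 2).factorial) :
    ∑ j ∈ J, α j ≤ M ∨ ∑ j ∈ J, b j ≤ M := by
  by_cases hb : ∀ j ∈ J, a j ≤ N'
  · exact c.zero hN H0 h0 ht0 hb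
  push Not at hb
  obtain ⟨j0, hj0, hb⟩ := hb
  have hs : ∑ j ∈ J.erase j0, a j ≤ e := by
    have := add_sum_erase J a hj0; omega
  rcases c.one hj0 hs (fun j hj => ((single_le_sum (fun _ _ => Nat.zero_le _) hj).trans hs).trans he) H1 h1 ht1 with ⟨h, -⟩ | ⟨h, -⟩
  · left
    have h2 := c.exta j0 hj0
    rw [sum_add_distrib] at h2
    have := add_sum_erase J α hj0; omega
  · right
    have h2 := c.extb j0 hj0
    rw [sum_add_distrib] at h2
    have := add_sum_erase J b hj0; omega

theorem Cut.of_arith {X : Finset V} {k i : V} (hk : k ∉ X) (hi : i ∈ X) (hki : G.Adj k i) {N' β' d' : ℕ}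
    (hC : Cut G X N' β') (hL : Loc G X d') {N M : ℕ}
    (H : ∀ (J : Finset V) a α b, Cfg (X.card + 1) N' β' d' J a α b → ∑ j ∈ J, a j ≤ N → ∑ j ∈ J, α j ≤ M ∨ ∑ j ∈ J, b j ≤ M) :
    Cut G (insert k X) N M := by
  intro g A B h hF
  have := H _ _ _ _ (h.cfg hk hi hki hC hL) (by rw [cls_sum (mem_insert_self _ _) _ sdiff_subset]; exact hF)
  rwa [cls_sum (mem_insert_self _ _) _ h.hA, cls_sum (mem_insert_self _ _) _ h.hB] at this

theorem Cut.improve {Y : Finset V} {N M β : ℕ} (h : Cut G Y N M)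
    (H : ∀ R : Finset (Perm V), β < R.card → R.card ≤ M → N < (nb G Y R).card) : Cut G Y N β := by
  intro g A B hS hF
  rcases h g A B hS hF with h1 | h1
  · left
    by_contra hc
    have := H A (not_le.1 hc) h1
    have h2 := card_le_card hS.symm.nb_sub
    rw [union_comm] at h2
    omega
  · right
    by_contra hc
    have := H B (not_le.1 hc) h1
    have h2 := card_le_card hS.nb_sub
    omega

theorem cut3 {X : Finset V} (h : TreeX G X) (h3 : X.card = 3) : Cut G X 1 0 := by
  intro g A B hS hF
  by_contra hc
  push Not at hc
  have hL := h.loc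
  rw [h3] at hL
  have h1 := hL A (card_pos.1 hc.1)
  have h2 := card_le_card hS.symm.nb_sub
  rw [union_comm] at h2
  have h4 := card_Blk X g
  rw [h3] at h4
  have h5 : (A ∪ B) ⊆ Blk X g := union_subset hS.hA hS.hB
  have h6 := card_sdiff_of_subset h5
  rw [card_union_of_disjoint hS.disj, h4] at h6
  have h7 := hL B (card_pos.1 hc.2)
  have h8 := card_le_card hS.nb_sub
  have h9 : A.card + B.card ≤ 6 := by
    have := card_le_card h5
    rw [card_union_of_disjoint hS.disj, h4] at this
    exact this
  have hf : Nat.factorial 3 = 6 := rfl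
  rw [hf] at h6
  have e1 : A.card ≤ 6 := by omega
  have e2 : B.card ≤ 6 := by omega
  obtain ⟨hc1, hc2⟩ := hc
  generalize A.card = x at *
  generalize B.card = y at *
  interval_cases x <;> interval_cases y <;> omega

theorem cut_leaf4 {X : Finset V} {k i : V} (hk : k ∉ X) (hi : i ∈ X) (hki : G.Adj k i) (h3 : X.card = 3)
    (hC : Cut G X 1 0) (hL : Loc G X 2) : Cut G (insert k X) 3 1 := by
  refine Cut.of_arith hk hi hki hC hL fun J a α b c hN => ?_
  rw [h3] at c
  refine c.leaf (e := 1) (p := 1) (q := 0) (p1 := 1) (q1 := 0) (M1 := 0) hN rfl (by norm_num) ?_ (by norm_num) (by decide) ?_ (by norm_num) (by norm_num) (by decide)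
  · intros; omega
  · intros; omega

theorem cut_leaf5 {X : Finset V} {k i : V} (hk : k ∉ X) (hi : i ∈ X) (hki : G.Adj k i) (h3 : X.card = 4)
    (hC : Cut G X 3 1) (hL : Loc G X 3) : Cut G (insert k X) 7 5 := by
  refine Cut.of_arith hk hi hki hC hL fun J a α b c hN => ?_
  rw [h3] at c
  refine c.leaf (e := 3) (p := 3) (q := 1) (p1 := 3) (q1 := 1) (M1 := 1) hN rfl (by norm_num) ?_ (by norm_num) (by decide) ?_ (by norm_num) (by norm_num) (by decide)
  · intro x s hx hs h; interval_cases s <;> omega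
  · intro x s hx hs h; interval_cases s <;> omega

theorem cut_leaf6 {X : Finset V} {k i : V} (hk : k ∉ X) (hi : i ∈ X) (hki : G.Adj k i) (h3 : X.card = 4 ∨ X.card = 5)
    (hC : Cut G X 7 3) (hL : Loc G X 4) : Cut G (insert k X) 11 4 := by
  refine Cut.of_arith hk hi hki hC hL fun J a α b c hN => ?_
  have h1 : 11 + 4 < (X.card + 1 - 1) * (X.card + 1 - 2).factorial := by rcases h3 with h | h <;> rw [h] <;> decide
  have h2 : 3 + 0 < (X.card + 1 - 2) * (X.card + 1 - 2).factorial := by rcases h3 with h | h <;> rw [h] <;> decide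
  refine c.leaf (e := 3) (p := 7) (q := 3) (p1 := 1) (q1 := 0) (M1 := 0) hN rfl (by norm_num) ?_ (by norm_num) h1 ?_ (by norm_num) (by norm_num) h2
  · intro x s hx hs h; interval_cases s <;> omega
  · intro x s hx hs h; interval_cases s <;> omega

theorem cut_leaf7 {X : Finset V} {k i : V} (hk : k ∉ X) (hi : i ∈ X) (hki : G.Adj k i) {d : ℕ} (hd : 5 ≤ d) (hX : 5 ≤ X.card) (hdX : d ≤ X.card)
    (hC : Cut G X (4 * d - 9) 4) (hL : Loc G X d) : Cut G (insert k X) (4 * (d + 1) - 9) 5 := by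
  refine Cut.of_arith hk hi hki hC hL fun J a α b c hN => ?_
  have h0 : 24 ≤ (X.card + 1 - 2).factorial := by
    have := Nat.factorial_le (show 4 ≤ X.card + 1 - 2 by omega)
    simpa [Nat.factorial] using this
  have h1 : (4 * (d + 1) - 9) + 5 < (X.card + 1 - 1) * (X.card + 1 - 2).factorial := by
    have := Nat.mul_le_mul_left (X.card + 1 - 1) h0
    omega
  have h2 : 3 + 0 < (X.card + 1 - 2) * (X.card + 1 - 2).factorial := by
    have := Nat.mul_le_mul_left (X.card + 1 - 2) h0
    omega
  refine c.leaf (e := 3) (p := 4 * d - 9) (q := 4) (p1 := 1) (q1 := 0) (M1 := 0) hN (by omega) (by omega) ?_ (by omega) h1 ?_ (by norm_num) (by norm_num) h2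
  · intro x s hx hs h; interval_cases s <;> omega
  · intro x s hx hs h; interval_cases s <;> omega

theorem Cut.improve5 {Y : Finset V} {d : ℕ} (hd : 6 ≤ d) (hL : Loc G Y d) (h : Cut G Y (4 * d - 9) 6) : Cut G Y (4 * d - 9) 4 := by
  refine h.improve fun R h1 h2 => ?_
  have := hL R (card_pos.1 (by omega))
  have h3 : R.card = 5 ∨ R.card = 6 := by omega
  rcases h3 with h3 | h3 <;> rw [h3] at this <;> omega

theorem Cut.mono {Y : Finset V} {N M M' : ℕ} (h : Cut G Y N M) (hM : M ≤ M') : Cut G Y N M' :=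
  fun g A B hS hF => (h g A B hS hF).imp (fun h => h.trans hM) (fun h => h.trans hM)

/-- cut property of trees, all sizes -/
theorem TreeX.cut {X : Finset V} (h : TreeX G X) (htri : Tri G) :
    (X.card = 3 → Cut G X 1 0) ∧ (X.card = 4 → Cut G X 3 1) ∧ (X.card = 5 → Cut G X 7 3) ∧
    (6 ≤ X.card → Cut G X (4 * (X.card - 1) - 9) 4) := by
  induction h with
  | single v => simp
  | @leaf X k i hX hk hi hki hu ih =>
    have hY := TreeX.leaf hX hk hi hki hu
    have hc := card_insert_of_notMem hk
    have hL := hX.loc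
    obtain ⟨i3, i4, i5, i6⟩ := ih
    refine ⟨fun h => cut3 hY h, fun h => ?_, fun h => ?_, fun h => ?_⟩
    · have h3 : X.card = 3 := by omega
      rw [h3] at hL
      exact cut_leaf4 hk hi hki h3 (i3 h3) hL
    · have h3 : X.card = 4 := by omega
      rw [h3] at hL
      refine (cut_leaf5 hk hi hki h3 (i4 h3) hL).improve fun R h1 h2 => ?_
      exact LOC4 (by omega) htri (by have := hY.card; omega) R (by omega) (by omega)
    · rw [hc] at h ⊢
      by_cases h3 : X.card = 5
      · rw [h3] at hL ⊢
        exact cut_leaf6 hk hi hki (Or.inr h3) (i5 h3) hL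
      · have := cut_leaf7 hk hi hki (d := X.card - 1) (by omega) (by omega) (by omega) (i6 (by omega)) hL
        have hL2 := hY.loc
        rw [hc] at hL2
        rw [show X.card - 1 + 1 = X.card + 1 - 1 by omega] at this
        by_cases h6 : X.card = 5
        · omega
        · exact Cut.improve5 (by omega) hL2 (this.mono (by norm_num))

end UG

namespace UG
open Equiv Finset
set_option linter.unusedSectionVars false
set_option linter.unusedVariables false
variable {V : Type*} [Fintype V] [DecidableEq V] {G : SimpleGraph V} [DecidableRel G.Adj]

/-- numerical data when the added vertex has two neighbours -/
structure CfgC (n N' β' d' : ℕ) (J : Finset V) (a α b : V → ℕ) : Prop where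
  cfg : Cfg n N' β' d' J a α b
  ext2b : ∀ j ∈ J, 2 * b j ≤ ∑ x ∈ J.erase j, (a x + b x)
  ext2a : ∀ j ∈ J, 2 * α j ≤ ∑ x ∈ J.erase j, (a x + α x)
  ext3b : ∀ j j1, j ≠ j1 → b j ≤ ∑ x ∈ (J.erase j).erase j1, (a x + b x)
  ext3a : ∀ j j1, j ≠ j1 → α j ≤ ∑ x ∈ (J.erase j).erase j1, (a x + α x)

theorem CfgC.symm {n N' β' d' : ℕ} {J : Finset V} {a α b : V → ℕ} (h : CfgC n N' β' d' J a α b) : CfgC n N' β' d' J a b α :=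
  ⟨h.cfg.symm, h.ext2a, h.ext2b, h.ext3a, h.ext3b⟩

theorem Cut.of_arithC {X : Finset V} {k i i' : V} (hk : k ∉ X) (hi : i ∈ X) (hi' : i' ∈ X) (hne : i ≠ i')
    (hki : G.Adj k i) (hki' : G.Adj k i') {N' β' d' : ℕ}
    (hC : Cut G X N' β') (hL : Loc G X d') {N M : ℕ}
    (H : ∀ (J : Finset V) a α b, CfgC (X.card + 1) N' β' d' J a α b → ∑ j ∈ J, a j ≤ N → ∑ j ∈ J, α j ≤ M ∨ ∑ j ∈ J, b j ≤ M) :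
    Cut G (insert k X) N M := by
  intro g A B h hF
  have comm : Blk (insert k X) g \ (B ∪ A) = Blk (insert k X) g \ (A ∪ B) := by rw [union_comm]
  have := H _ _ _ _ ⟨h.cfg hk hi hki hC hL, fun j hj => h.ext2 hi hi' hne hki hki' j,
      fun j hj => by have := h.symm.ext2 hi hi' hne hki hki' j; rwa [comm] at this,
      fun j j1 hj => h.ext3 hi hi' hne hki hki' j j1 hj,
      fun j j1 hj => by have := h.symm.ext3 hi hi' hne hki hki' j j1 hj; rwa [comm] at this⟩
    (by rw [cls_sum (mem_insert_self _ _) _ sdiff_subset]; exact hF)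
  rwa [cls_sum (mem_insert_self _ _) _ h.hA, cls_sum (mem_insert_self _ _) _ h.hB] at this

theorem cyc5 {X : Finset V} {k i i' : V} (hk : k ∉ X) (hi : i ∈ X) (hi' : i' ∈ X) (hne : i ≠ i')
    (hki : G.Adj k i) (hki' : G.Adj k i') (h4 : X.card = 4)
    (hC : Cut G X 3 1) (hL : Loc G X 3) : Cut G (insert k X) 11 9 := by
  refine Cut.of_arithC hk hi hi' hne hki hki' hC hL fun J a α b C hN => ?_
  rw [h4] at C
  have c := C.cfg
  by_cases hb : ∀ j ∈ J, a j ≤ 3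
  · refine (c.zero (p := 3) (q := 1) (M := 3) hN ?_ (by norm_num) (by decide) hb).imp (fun h => by omega) (fun h => by omega)
    intro x s hx hs h; interval_cases s <;> omega
  push Not at hb
  obtain ⟨j0, hj0, hb0⟩ := hb
  have e0 := add_sum_erase J a hj0
  by_cases hb : ∀ j ∈ J.erase j0, a j ≤ 3
  · have H1 : ∀ x s, x ≤ 7 → s ≤ 1 → (1 ≤ s → 2 * s * 3 + 2 ≤ 2 * x + s * (s + 1)) → 3 * s ≤ 1 * x := by
      intro x s hx hs h; interval_cases s <;> omega
    rcases c.one (e := 7) (M1 := 2) hj0 (by omega) hb H1 (by norm_num) (by decide) with ⟨h, -⟩ | ⟨h, -⟩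
    · left
      have h2 := C.ext2a j0 hj0
      rw [sum_add_distrib] at h2
      have := add_sum_erase J α hj0; omega
    · right
      have h2 := C.ext2b j0 hj0
      rw [sum_add_distrib] at h2
      have := add_sum_erase J b hj0; omega
  push Not at hb
  obtain ⟨j1, hj1, hb1⟩ := hb
  have e1 := add_sum_erase _ a hj1
  have hsum : ∑ j ∈ (J.erase j0).erase j1, a j ≤ 3 := by omega
  have hle : ∀ j ∈ (J.erase j0).erase j1, a j ≤ 3 := fun j hj => (single_le_sum (fun _ _ => Nat.zero_le _) hj).trans hsum
  have hs : ∑ j ∈ (J.erase j0).erase j1, min (α j) (b j) ≤ 1 := by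
    refine wsum (a := a) (p := 3) (q := 1) (fun j hj => ?_) hsum (by norm_num)
    have := c.small (mem_of_mem_erase (mem_of_mem_erase hj)) (hle j hj)
    generalize min (α j) (b j) = s at *
    obtain ⟨t1, t2⟩ := this
    interval_cases s <;> omega
  have hsd : J \ {j0, j1} = (J.erase j0).erase j1 := by
    ext z; simp only [mem_sdiff, mem_insert, mem_singleton, mem_erase]; tauto
  have hne01 : j0 ≠ j1 := fun e => by rw [e] at hj1; simp at hj1
  have ht := c.type {j0, j1} (by
      intro z hz; rw [mem_insert, mem_singleton] at hz
      rcases hz with rfl | rfl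
      · exact hj0
      · exact mem_of_mem_erase hj1) (by
    rw [hsd, sum_add_distrib, card_pair hne01]
    have : (4 + 1 - 2 - 1) * (4 + 1 - 2).factorial = 12 := by decide
    rw [this]; omega)
  rw [hsd] at ht
  have key : ∀ b : V → ℕ, (∀ j j1, j ≠ j1 → b j ≤ ∑ x ∈ (J.erase j).erase j1, (a x + b x)) →
      ∑ j ∈ (J.erase j0).erase j1, b j ≤ 1 → ∑ j ∈ J, b j ≤ 9 := by
    intro b h3 h1
    have x0 := h3 j0 j1 hne01
    have x1 := h3 j1 j0 hne01.symm
    rw [erase_right_comm] at x1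
    rw [sum_add_distrib] at x0 x1
    have := add_sum_erase J b hj0
    have := add_sum_erase _ b hj1
    omega
  rcases ht with ht | ht
  · right; exact key b C.ext3b (by rw [Cfg.sumb (J := J) ht]; exact hs)
  · left; exact key α C.ext3a (by rw [Cfg.sumb (J := J) ht]; simp only [min_comm (b _)]; exact hs)

theorem cyc6 {X : Finset V} {k i i' : V} (hk : k ∉ X) (hi : i ∈ X) (hi' : i' ∈ X) (hne : i ≠ i')
    (hki : G.Adj k i) (hki' : G.Adj k i') (h5 : X.card = 5)
    (hC : Cut G X 7 3) (hL : Loc G X 4) : Cut G (insert k X) 15 6 := by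
  refine Cut.of_arithC hk hi hi' hne hki hki' hC hL fun J a α b C hN => ?_
  rw [h5] at C
  have c := C.cfg
  by_cases hb : ∀ j ∈ J, a j ≤ 7
  · refine (c.zero (p := 7) (q := 3) (M := 6) hN ?_ (by norm_num) (by decide) hb)
    intro x s hx hs h; interval_cases s <;> omega
  push Not at hb
  obtain ⟨j0, hj0, hb0⟩ := hb
  have e0 := add_sum_erase J a hj0
  have hsum : ∑ j ∈ J.erase j0, a j ≤ 7 := by omega
  have hb : ∀ j ∈ J.erase j0, a j ≤ 7 := fun j hj => (single_le_sum (fun _ _ => Nat.zero_le _) hj).trans hsum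
  have key : ∀ α b, CfgC (5 + 1) 7 3 4 J a α b → ∑ j ∈ J.erase j0, b j ≤ 3 → ∑ j ∈ J, b j ≤ 6 := by
    intro α b C h3
    have hb3 : ∀ j ∈ J.erase j0, b j ≤ 3 := fun j hj => (single_le_sum (fun _ _ => Nat.zero_le _) hj).trans h3
    have eb := add_sum_erase J b hj0
    by_cases hz : ∀ j ∈ J.erase j0, b j = 0
    · have h2 := C.ext2b j0 hj0
      rw [sum_add_distrib, sum_eq_zero hz] at h2
      rw [sum_eq_zero hz] at eb
      omega
    push Not at hz
    obtain ⟨j1, hj1, hz⟩ := hz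
    have hne01 : j0 ≠ j1 := fun e => by rw [e] at hj1; simp at hj1
    have ha1 : 4 ≤ a j1 := by
      have t1 := C.cfg.locb j1 (mem_of_mem_erase hj1) (by omega)
      have t2 := hb3 j1 hj1
      generalize b j1 = s at *
      interval_cases s <;> omega
    have e1 := add_sum_erase _ a hj1
    have eb1 := add_sum_erase _ b hj1
    have hs2 : ∑ j ∈ (J.erase j0).erase j1, a j ≤ 3 := by omega
    have hz2 : ∀ j ∈ (J.erase j0).erase j1, b j = 0 := by
      intro j hj
      have t0 : a j ≤ 3 := (single_le_sum (fun _ _ => Nat.zero_le _) hj).trans hs2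
      have t1 := C.cfg.locb j (mem_of_mem_erase (mem_of_mem_erase hj))
      have t2 := hb3 j (mem_of_mem_erase hj)
      generalize b j = s at *
      interval_cases s <;> omega
    have x0 := C.ext3b j0 j1 hne01
    rw [sum_add_distrib, sum_eq_zero hz2] at x0
    rw [sum_eq_zero hz2] at eb1
    have := hb3 j1 hj1
    omega
  have H1 : ∀ x s, x ≤ 7 → s ≤ 3 → (1 ≤ s → 2 * s * 4 + 2 ≤ 2 * x + s * (s + 1)) → 7 * s ≤ 3 * x := by
    intro x s hx hs h; interval_cases s <;> omega
  rcases c.one (e := 7) (M1 := 3) hj0 hsum hb H1 (by norm_num) (by decide) with ⟨h, -⟩ | ⟨h, -⟩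
  · left; exact key _ _ C.symm h
  · right; exact key _ _ C h

theorem cyc7 {X : Finset V} {k i i' : V} (hk : k ∉ X) (hi : i ∈ X) (hi' : i' ∈ X) (hne : i ≠ i')
    (hki : G.Adj k i) (hki' : G.Adj k i') {d : ℕ} (hd : 5 ≤ d) (hdX : d + 1 = X.card)
    (hC : Cut G X (4 * d - 9) 4) (hL : Loc G X d) : Cut G (insert k X) (4 * (d + 2) - 9) 6 := by
  refine Cut.of_arithC hk hi hi' hne hki hki' hC hL fun J a α b C hN => ?_
  have c := C.cfg
  have h0 : 24 ≤ (X.card + 1 - 2).factorial := by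
    have := Nat.factorial_le (show 4 ≤ X.card + 1 - 2 by omega)
    simpa [Nat.factorial] using this
  have h1 : (4 * (d + 2) - 9) + 6 < (X.card + 1 - 1) * (X.card + 1 - 2).factorial := by
    have := Nat.mul_le_mul_left (X.card + 1 - 1) h0
    omega
  have h2 : 7 + 1 < (X.card + 1 - 2) * (X.card + 1 - 2).factorial := by
    have := Nat.mul_le_mul_left (X.card + 1 - 2) h0
    omega
  by_cases hb : ∀ j ∈ J, a j ≤ 4 * d - 9
  · refine (c.zero (p := 4 * d - 9) (q := 4) (M := 6) hN ?_ (by omega) h1 hb)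
    intro x s hx hs h; interval_cases s <;> omega
  push Not at hb
  obtain ⟨j0, hj0, hb0⟩ := hb
  have e0 := add_sum_erase J a hj0
  have hsum : ∑ j ∈ J.erase j0, a j ≤ 7 := by omega
  have hb : ∀ j ∈ J.erase j0, a j ≤ 4 * d - 9 := fun j hj =>
    ((single_le_sum (fun _ _ => Nat.zero_le _) hj).trans hsum).trans (by omega)
  have H1 : ∀ x s, x ≤ 7 → s ≤ 4 → (1 ≤ s → 2 * s * d + 2 ≤ 2 * x + s * (s + 1)) → 5 * s ≤ 1 * x := by
    intro x s hx hs h; interval_cases s <;> omega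
  rcases c.one (e := 7) (M1 := 1) hj0 hsum hb H1 (by norm_num) h2 with ⟨h, -⟩ | ⟨h, -⟩
  · left
    have h2 := C.ext2a j0 hj0
    rw [sum_add_distrib] at h2
    have := add_sum_erase J α hj0; omega
  · right
    have h2 := C.ext2b j0 hj0
    rw [sum_add_distrib] at h2
    have := add_sum_erase J b hj0; omega

theorem Sep.mv {X : Finset V} {k u v : V} {g : Perm V} {A B : Finset (Perm V)} (h : Sep G (insert k X) g A B)
    (hu : u ∈ insert k X) (hv : v ∈ insert k X) (huv : G.Adj u v) (j : V) :
    (B.filter fun h => h u = j).card ≤ ((Blk (insert k X) g \ (A ∪ B)).filter fun h => h v = j).card + (B.filter fun h => h v = j).card := by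
  have hs : swap u v ∈ ES G (insert k X) := mem_ES.2 ⟨u, hu, v, hv, huv, rfl⟩
  rw [← card_image_of_injective _ (mul_left_injective (swap u v))]
  refine le_trans (card_le_card ?_) (card_union_le _ _)
  intro z hz
  obtain ⟨b, hb, rfl⟩ := mem_image.1 hz
  rw [mem_filter] at hb
  have := h.mulB hb.1 hs
  have e : (b * swap u v) v = j := by simp [hb.2]
  rw [mem_union] at this ⊢
  rw [mem_filter, mem_filter]
  tauto

theorem cyc4 {X : Finset V} {k i i' : V} (htri : Tri G) (hT : TreeX G X) (hk : k ∉ X) (hi : i ∈ X) (hi' : i' ∈ X) (hne : i ≠ i')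
    (hki : G.Adj k i) (hki' : G.Adj k i') (h3 : X.card = 3)
    (hC : Cut G X 1 0) : Cut G (insert k X) 7 6 := by
  have hq : ∃ q, q ≠ i ∧ q ≠ i' ∧ X = {i, i', q} := by
    have : ((X.erase i).erase i').card = 1 := by
      rw [card_erase_of_mem (mem_erase.2 ⟨hne.symm, hi'⟩), card_erase_of_mem hi, h3]
    obtain ⟨q, hq⟩ := card_eq_one.1 this
    have hq1 : q ∈ (X.erase i).erase i' := by rw [hq]; simp
    rw [mem_erase, mem_erase] at hq1
    refine ⟨q, hq1.2.1, hq1.1, ?_⟩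
    rw [← hq, insert_erase (mem_erase.2 ⟨hne.symm, hi'⟩), insert_erase hi]
  obtain ⟨q, hqi, hqi', hX⟩ := hq
  have hES := hT.card
  rw [h3] at hES
  have hii : ¬ G.Adj i i' := htri i k i' hki.symm hki'
  have hiq : G.Adj i q := by
    by_contra hc
    have : ES G X ⊆ {swap i' q} := by
      intro t ht
      obtain ⟨u, hu, v, hv, huv, rfl⟩ := mem_ES.1 ht
      rw [hX] at hu hv
      simp only [mem_insert, mem_singleton] at hu hv ⊢
      rcases hu with rfl | rfl | rfl <;> rcases hv with rfl | rfl | rfl <;>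
        first
          | exact absurd rfl huv.ne
          | exact absurd huv hii
          | exact absurd huv.symm hii
          | exact absurd huv hc
          | exact absurd huv.symm hc
          | rfl
          | exact swap_comm _ _
    have := card_le_card this
    rw [card_singleton] at this
    omega
  have hiq' : G.Adj i' q := by
    by_contra hc
    have : ES G X ⊆ {swap i q} := by
      intro t ht
      obtain ⟨u, hu, v, hv, huv, rfl⟩ := mem_ES.1 ht
      rw [hX] at hu hv
      simp only [mem_insert, mem_singleton] at hu hv ⊢
      rcases hu with rfl | rfl | rfl <;> rcases hv with rfl | rfl | rfl <;>
        first
          | exact absurd rfl huv.ne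
          | exact absurd huv hii
          | exact absurd huv.symm hii
          | exact absurd huv hc
          | exact absurd huv.symm hc
          | rfl
          | exact swap_comm _ _
    have := card_le_card this
    rw [card_singleton] at this
    omega
  have hqX : q ∈ X := by rw [hX]; simp
  have hkq : k ≠ q := fun e => hk (e ▸ hqX)
  have key : ∀ g A B, Sep G (insert k X) g A B → (Blk (insert k X) g \ (A ∪ B)).card ≤ 7 → ∀ j1 ∈ (insert k X).image g,
      ((Blk (insert k X) g \ (A ∪ B)).filter fun h => h k = j1).card ≤ 1 → (B.filter fun h => h k = j1).card ≤ 0 → B.card ≤ 6 := by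
    intro g A B hS hF j1 hj1 ha hB0
    have m1 := hS.mv (u := i) (v := k) (by simp [hi]) (by simp) hki.symm j1
    have m2 := hS.mv (u := i') (v := k) (by simp [hi']) (by simp) hki'.symm j1
    have m3 := hS.mv (u := q) (v := i) (by simp [hqX]) (by simp [hi]) hiq.symm j1
    have m4 := hS.mv (u := q) (v := i') (by simp [hqX]) (by simp [hi']) hiq'.symm j1
    have hFd : ((Blk (insert k X) g \ (A ∪ B)).filter fun h => h i = j1).card + ((Blk (insert k X) g \ (A ∪ B)).filter fun h => h i' = j1).card
        + ((Blk (insert k X) g \ (A ∪ B)).filter fun h => h k = j1).card ≤ 7 := by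
      rw [← card_union_of_disjoint, ← card_union_of_disjoint]
      · refine (card_le_card ?_).trans hF
        exact union_subset (union_subset (filter_subset _ _) (filter_subset _ _)) (filter_subset _ _)
      · rw [disjoint_left]
        intro z hz hz'
        rw [mem_union, mem_filter, mem_filter] at hz
        rw [mem_filter] at hz'
        rcases hz with hz | hz
        · exact hki.ne (z.injective (hz'.2.trans hz.2.symm))
        · exact hki'.ne (z.injective (hz'.2.trans hz.2.symm))
      · rw [disjoint_left]
        intro z hz hz'
        rw [mem_filter] at hz hz'
        exact hne (z.injective (hz.2.trans hz'.2.symm))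
    have hBs : B ⊆ (B.filter fun h => h k = j1) ∪ ((B.filter fun h => h i = j1) ∪ ((B.filter fun h => h i' = j1) ∪ (B.filter fun h => h q = j1))) := by
      intro z hz
      have hz1 : g ∈ Blk (insert k X) z := by
        have := hS.hB hz
        rw [mem_Blk] at this ⊢
        intro v hv; rw [this v hv]
      obtain ⟨w, hw, rfl⟩ := mem_image.1 hj1
      obtain ⟨w', hw', e⟩ := mem_image.1 (Blk_val hz1 hw)
      rw [hX] at hw'
      simp only [mem_insert, mem_singleton] at hw'
      simp only [mem_union, mem_filter]
      rcases hw' with rfl | rfl | rfl | rfl <;> simp [hz, e]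
    have hc := card_le_card hBs
    have c1 := card_union_le (B.filter fun h => h k = j1) ((B.filter fun h => h i = j1) ∪ ((B.filter fun h => h i' = j1) ∪ (B.filter fun h => h q = j1)))
    have c2 := card_union_le (B.filter fun h => h i = j1) ((B.filter fun h => h i' = j1) ∪ (B.filter fun h => h q = j1))
    have c3 := card_union_le (B.filter fun h => h i' = j1) (B.filter fun h => h q = j1)
    omega
  intro g A B hS hF
  have hex : ∃ j1 ∈ (insert k X).image g, ((Blk (insert k X) g \ (A ∪ B)).filter fun h => h k = j1).card ≤ 1 := by
    by_contra hc
    push Not at hc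
    have h1 : ∑ j ∈ (insert k X).image g, 2 ≤ ∑ j ∈ (insert k X).image g, ((Blk (insert k X) g \ (A ∪ B)).filter fun h => h k = j).card :=
      sum_le_sum fun j hj => hc j hj
    rw [cls_sum (mem_insert_self _ _) _ sdiff_subset, sum_const, card_image_of_injective _ g.injective,
      card_insert_of_notMem hk, h3, smul_eq_mul] at h1
    omega
  obtain ⟨j1, hj1, ha⟩ := hex
  obtain ⟨h0, hS0, e⟩ := hS.copy hk hj1
  rcases hC h0 _ _ hS0 (by rw [e]; exact ha) with h | h
  · left; exact key g B A hS.symm (by rwa [union_comm]) j1 hj1 (by rwa [union_comm]) h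
  · right; exact key g A B hS hF j1 hj1 ha h

theorem UniX.four {X : Finset V} (h : UniX G X) (htri : Tri G) : 4 ≤ X.card := by
  induction h with
  | @leaf X k i hX hk hi hki hu ih => rw [card_insert_of_notMem hk]; omega
  | @cyc X k i i' hT hk hi hi' hne hki hki' hu =>
    rw [card_insert_of_notMem hk]
    by_contra hc
    have hs : ({i, i'} : Finset V) ⊆ X := by
      intro z hz; rw [mem_insert, mem_singleton] at hz; rcases hz with rfl | rfl <;> assumption
    have h2 := card_le_card hs
    rw [card_pair hne] at h2
    have h3 := eq_of_subset_of_card_le hs (by rw [card_pair hne]; omega)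
    have h4 := hT.card
    rw [← h3, card_pair hne] at h4
    obtain ⟨t, ht⟩ := card_pos.1 (show 0 < (ES G {i, i'}).card by omega)
    have hii : ¬ G.Adj i i' := htri i k i' hki.symm hki'
    obtain ⟨u, hu, v, hv, huv, rfl⟩ := mem_ES.1 ht
    simp only [mem_insert, mem_singleton] at hu hv
    rcases hu with rfl | rfl <;> rcases hv with rfl | rfl
    · exact huv.ne rfl
    · exact hii huv
    · exact hii huv.symm
    · exact huv.ne rfl

theorem UniX.cut {X : Finset V} (h : UniX G X) (htri : Tri G) :
    (X.card = 4 → Cut G X 7 3) ∧ (5 ≤ X.card → Cut G X (4 * X.card - 9) 4) := by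
  induction h with
  | @leaf X k i hX hk hi hki hu ih =>
    have hY := UniX.leaf hX hk hi hki hu
    have hc := card_insert_of_notMem hk
    have hL := hX.loc htri
    have hL2 := hY.loc htri
    have h4 := hX.four htri
    rw [hc] at hL2
    obtain ⟨i4, i5⟩ := ih
    rw [hc]
    refine ⟨fun h => by omega, fun h => ?_⟩
    by_cases h3 : X.card = 4
    · rw [h3] at hL ⊢
      exact cut_leaf6 hk hi hki (Or.inl h3) (i4 h3) hL
    · exact Cut.improve5 (by omega) hL2 ((cut_leaf7 hk hi hki (d := X.card) (by omega) (by omega) le_rfl (i5 (by omega)) hL).mono (by norm_num))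
  | @cyc X k i i' hT hk hi hi' hne hki hki' hu =>
    have hY := UniX.cyc hT hk hi hi' hne hki hki' hu
    have hc := card_insert_of_notMem hk
    have hL := hT.loc
    have hL2 := hY.loc htri
    have hcard := hY.card
    obtain ⟨i3, i4, i5, i6⟩ := hT.cut htri
    constructor
    · intro h
      have h3 : X.card = 3 := by omega
      refine (cyc4 htri hT hk hi hi' hne hki hki' h3 (i3 h3)).improve fun R h1 h2 => ?_
      exact LOC4 (by omega) htri (by omega) R (by omega) (by omega)
    · intro h
      rw [hc] at h hL2 ⊢
      by_cases h4 : X.card = 4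
      · rw [h4] at hL ⊢
        refine (cyc5 hk hi hi' hne hki hki' h4 (i4 h4) hL).improve fun R h1 h2 => ?_
        exact LOC5 (by omega) htri (by omega) R (by omega) (by omega)
      by_cases h5 : X.card = 5
      · rw [h5] at hL hL2 ⊢
        exact Cut.improve5 (by omega) hL2 (cyc6 hk hi hi' hne hki hki' h5 (i5 h5) hL)
      · have := cyc7 hk hi hi' hne hki hki' (d := X.card - 1) (by omega) (by omega) (i6 (by omega)) hL
        rw [show X.card - 1 + 2 = X.card + 1 by omega] at this
        exact Cut.improve5 (by omega) hL2 this

end UG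

namespace UG
open Equiv Finset
set_option linter.unusedSectionVars false
set_option linter.unusedVariables false
variable {V : Type*} [Fintype V] [DecidableEq V] {G : SimpleGraph V} [DecidableRel G.Adj]

/-- sets grown one vertex at a time -/
inductive ConX (G : SimpleGraph V) : Finset V → Prop
  | single (v : V) : ConX G {v}
  | step {X : Finset V} {k i : V} : ConX G X → k ∉ X → i ∈ X → G.Adj k i → ConX G (insert k X)

theorem conX_univ (h : G.Connected) : ConX G univ := by
  classical
  obtain ⟨v⟩ := h.nonempty
  obtain ⟨X, hX, hmax⟩ := exists_max_image (univ.filter fun X : Finset V => ConX G X) card ⟨{v}, by simp [ConX.single v]⟩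
  rw [mem_filter] at hX
  have hXu : X = univ := by
    by_contra hne
    obtain ⟨w, hw⟩ : ∃ w, w ∉ X := by
      by_contra hc; push Not at hc; exact hne (eq_univ_iff_forall.2 hc)
    have : ∃ u, u ∈ X := by
      cases hX.2 with
      | single v => exact ⟨v, by simp⟩
      | step _ _ hi _ => exact ⟨_, mem_insert_of_mem hi⟩
    obtain ⟨u, hu⟩ := this
    obtain ⟨p⟩ := h.preconnected u w
    obtain ⟨d, -, h1, h2⟩ := p.exists_boundary_dart (X : Set V) hu hw
    have h3 := hmax (insert d.snd X) (by simp [ConX.step hX.2 h2 h1 d.adj.symm])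
    rw [card_insert_of_notMem h2] at h3
    omega
  rw [← hXu]; exact hX.2

theorem ES_insert_ge {X : Finset V} {k : V} (hk : k ∉ X) :
    (ES G X).card + (X.filter fun j => G.Adj k j).card ≤ (ES G (insert k X)).card := by
  have inj : Set.InjOn (fun j => swap k j) (X.filter fun j => G.Adj k j : Finset V) := by
    intro x hx y hy e
    have := congrArg (fun f : Perm V => f k) e
    simpa using this
  rw [← card_image_of_injOn inj, ← card_union_of_disjoint]
  · apply card_le_card
    apply union_subset (ES_mono (subset_insert _ _))
    intro t ht
    obtain ⟨j, hj, rfl⟩ := mem_image.1 ht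
    rw [mem_filter] at hj
    exact mem_ES.2 ⟨k, by simp, j, by simp [hj.1], hj.2, rfl⟩
  · rw [disjoint_left]
    intro t ht ht'
    obtain ⟨j, hj, rfl⟩ := mem_image.1 ht'
    exact swap_notMem_ES hk (mem_filter.1 hj).2.ne ht

theorem ConX.struct {X : Finset V} (h : ConX G X) : X.card ≤ (ES G X).card + 1 ∧
    ((ES G X).card + 1 = X.card → TreeX G X) ∧ ((ES G X).card = X.card → UniX G X) := by
  induction h with
  | single v =>
    have : ES G {v} = ∅ := by
      have := (TreeX.single (G := G) v).card
      rw [card_singleton] at this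
      exact card_eq_zero.1 (by omega)
    rw [this]
    exact ⟨by simp, fun _ => TreeX.single v, by simp⟩
  | @step X k i hX hk hi hki ih =>
    obtain ⟨i1, i2, i3⟩ := ih
    have hge := ES_insert_ge (G := G) hk
    have hc := card_insert_of_notMem hk
    have him : i ∈ X.filter fun j => G.Adj k j := mem_filter.2 ⟨hi, hki⟩
    have hr := card_pos.2 ⟨i, him⟩
    have one : (X.filter fun j => G.Adj k j).card = 1 → (∀ j ∈ X, G.Adj k j → j = i) ∧ (ES G (insert k X)).card = (ES G X).card + 1 := by
      intro h1
      have hu : ∀ j ∈ X, G.Adj k j → j = i := by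
        intro j hj hkj
        exact card_le_one.1 h1.le j (mem_filter.2 ⟨hj, hkj⟩) i him
      refine ⟨hu, ?_⟩
      rw [ES_leaf hi hki hu, card_insert_of_notMem (swap_notMem_ES hk hki.ne)]
    refine ⟨by omega, fun h => ?_, fun h => ?_⟩
    · obtain ⟨hu, he⟩ := one (by omega)
      exact TreeX.leaf (i2 (by omega)) hk hi hki hu
    · by_cases h1 : (X.filter fun j => G.Adj k j).card = 1
      · obtain ⟨hu, he⟩ := one h1
        exact UniX.leaf (i3 (by omega)) hk hi hki hu
      · have h2 : (X.filter fun j => G.Adj k j).card = 2 := by omega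
        have h3 : ((X.filter fun j => G.Adj k j).erase i).card = 1 := by rw [card_erase_of_mem him, h2]
        obtain ⟨i', hi'⟩ := card_eq_one.1 h3
        have hm : i' ∈ (X.filter fun j => G.Adj k j).erase i := by rw [hi']; simp
        rw [mem_erase, mem_filter] at hm
        refine UniX.cyc (i2 (by omega)) hk hi hm.2.1 (Ne.symm hm.1) hki hm.2.2 ?_
        intro j hj hkj
        by_cases hji : j = i
        · exact Or.inl hji
        · right
          have : j ∈ (X.filter fun j => G.Adj k j).erase i := mem_erase.2 ⟨hji, mem_filter.2 ⟨hj, hkj⟩⟩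
          rw [hi'] at this; simpa using this

theorem ES_univ_card : (ES G univ).card = G.edgeSet.ncard := by
  classical
  let f : Sym2 V → Perm V := Sym2.lift ⟨fun a b => swap a b, fun a b => swap_comm a b⟩
  have hE : ES G univ = G.edgeFinset.image f := by
    ext t
    rw [mem_ES, mem_image]
    constructor
    · rintro ⟨a, -, b, -, hab, rfl⟩
      exact ⟨s(a, b), by simpa using hab, rfl⟩
    · rintro ⟨e, he, rfl⟩
      induction e using Sym2.ind with
      | _ a b => exact ⟨a, mem_univ _, b, mem_univ _, by simpa using he, rfl⟩
  have inj : Set.InjOn f (G.edgeFinset : Set (Sym2 V)) := by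
    intro x hx y hy e
    induction x using Sym2.ind with
    | _ a b =>
    induction y using Sym2.ind with
    | _ c d =>
      have hab : G.Adj a b := by simpa using hx
      have e : swap a b = swap c d := e
      have e1 : swap c d a = b := by rw [← e]; simp
      by_cases hac : a = c
      · subst hac; rw [swap_apply_left] at e1; rw [e1]
      · by_cases had : a = d
        · subst had; rw [swap_apply_right] at e1; rw [e1]; exact Sym2.eq_swap
        · rw [swap_apply_of_ne_of_ne hac had] at e1
          exact absurd e1 hab.ne
  rw [hE, card_image_of_injOn inj, ← Set.ncard_coe_finset, SimpleGraph.coe_edgeFinset]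

theorem uniX_univ (h : G.Connected) (hE : G.edgeSet.ncard = Fintype.card V) : UniX G univ := by
  apply (conX_univ h).struct.2.2
  rw [ES_univ_card, hE, card_univ]

theorem Blk_univ (g : Perm V) : Blk univ g = univ := by
  ext h; simp [mem_Blk]

theorem Nb_two {X : Finset V} (htri : Tri G) {S : Finset (Perm V)} (hS : 2 ≤ S.card) :
    2 * (ES G X).card ≤ (Nb G X S).card + 2 := by
  obtain ⟨x, hx, y, hy, hxy⟩ := one_lt_card.1 (show 1 < S.card by omega)
  have h1 : nbs G X x ∪ nbs G X y ⊆ Nb G X S :=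
    union_subset (subset_biUnion_of_mem (nbs G X) hx) (subset_biUnion_of_mem (nbs G X) hy)
  have h2 := card_le_card h1
  have h3 := card_union_add_card_inter (nbs G X x) (nbs G X y)
  have h4 := cn_le (X := X) htri hxy
  rw [card_nbs, card_nbs] at h3
  omega

theorem four_nb {X : Finset V} (htri : Tri G) {R : Finset (Perm V)} (hR : R.card ≤ 4)
    (h0 : 2 ≤ (R.filter fun h => Perm.sign h = 1).card) (h1 : 2 ≤ (R.filter fun h => Perm.sign h = -1).card) :
    4 * (ES G X).card ≤ (nb G X R).card + 8 := by
  have hs := nb_split (G := G) X R (e := 1)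
  have hc := card_split R 1
  have n0 := Nb_two (X := X) htri h0
  have n1 := Nb_two (X := X) htri h1
  have k0 := le_card_sdiff (R.filter fun h => Perm.sign h = -1) (Nb G X (R.filter fun h => Perm.sign h = 1))
  have k1 := le_card_sdiff (R.filter fun h => Perm.sign h = 1) (Nb G X (R.filter fun h => Perm.sign h = -1))
  omega

/-- the lower bound in combinatorial form -/
theorem lower (htri : Tri G) (hU : UniX G univ) {A B : Finset (Perm V)} (hd : Disjoint A B)
    (hne : ∀ a ∈ A, ∀ t ∈ ES G univ, a * t ∉ B)
    (hA : ∀ e : ℤˣ, 2 ≤ (A.filter fun h => Perm.sign h = e).card)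
    (hB : ∀ e : ℤˣ, 2 ≤ (B.filter fun h => Perm.sign h = e).card) :
    4 * Fintype.card V - 8 ≤ (univ \ (A ∪ B)).card := by
  by_contra hc
  have hS : Sep G univ 1 A B := ⟨by rw [Blk_univ]; exact subset_univ _, by rw [Blk_univ]; exact subset_univ _, hd, hne⟩
  have h4 := hU.four htri
  have hcard := hU.card
  obtain ⟨c4, c5⟩ := hU.cut htri
  rw [card_univ] at h4 c4 c5 hcard
  have hcut : Cut G univ (4 * Fintype.card V - 9) 4 := by
    by_cases h : Fintype.card V = 4
    · have := (c4 h).mono (show 3 ≤ 4 by norm_num)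
      rw [h]; exact this
    · exact c5 (by omega)
  have hn1 := card_le_card hS.nb_sub
  have hn2 := card_le_card hS.symm.nb_sub
  rw [union_comm B A] at hn2
  rw [Blk_univ] at hn1 hn2
  rcases hcut 1 A B hS (by rw [Blk_univ]; omega) with h | h
  · have := four_nb (X := univ) htri h (hA 1) (hA (-1))
    omega
  · have := four_nb (X := univ) htri h (hB 1) (hB (-1))
    omega

end UG

namespace UG
open Equiv Finset
set_option linter.unusedSectionVars false
set_option linter.unusedVariables false

section tri
variable {V : Type*} [Fintype V] [DecidableEq V] {G : SimpleGraph V} [DecidableRel G.Adj]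

theorem tri_of_cliqueFree (h : G.CliqueFree 3) : Tri G := by
  intro a b c hab hbc hac
  exact h {a, b, c} (SimpleGraph.is3Clique_triple_iff.2 ⟨hab, hac, hbc⟩)

theorem TreeX.has_nb {X : Finset V} (h : TreeX G X) : 2 ≤ X.card → ∀ x ∈ X, ∃ y ∈ X, G.Adj x y := by
  induction h with
  | single v => simp
  | @leaf X k i hX hk hi hki hu ih =>
    intro _ x hx
    rw [mem_insert] at hx
    rcases hx with rfl | hx
    · exact ⟨i, mem_insert_of_mem hi, hki⟩
    · by_cases h2 : 2 ≤ X.card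
      · obtain ⟨y, hy, hxy⟩ := ih h2 x hx
        exact ⟨y, mem_insert_of_mem hy, hxy⟩
      · have : x = i := card_le_one.1 (by omega) x hx i hi
        exact ⟨k, mem_insert_self _ _, this ▸ hki.symm⟩

theorem UniX.two_edges {X : Finset V} (htri : Tri G) (h : UniX G X) : ∃ p q r s, G.Adj p q ∧ G.Adj r s ∧
    p ≠ r ∧ p ≠ s ∧ q ≠ r ∧ q ≠ s := by
  induction h with
  | leaf _ _ _ _ _ ih => exact ih
  | @cyc X k i i' hT hk hi hi' hne hki hki' hu =>
    have h2 : 2 ≤ X.card := by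
      have : 1 < X.card := one_lt_card.2 ⟨i, hi, i', hi', hne⟩
      omega
    obtain ⟨q, hq, hiq⟩ := hT.has_nb h2 i hi
    refine ⟨i, q, k, i', hiq, hki', hki.ne.symm, hne, fun e => hk (e ▸ hq), ?_⟩
    rintro rfl
    exact htri i k q hki.symm hki' hiq

/-- keeps the two pairs -/
def Keep (p q r s : V) (y : Perm V) : Prop :=
  (y p = p ∨ y p = q) ∧ (y q = p ∨ y q = q) ∧ (y r = r ∨ y r = s) ∧ (y s = r ∨ y s = s)

/-- exchanges the two pairs -/
def Flip (p q r s : V) (y : Perm V) : Prop :=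
  (y p = r ∨ y p = s) ∧ (y q = r ∨ y q = s) ∧ (y r = p ∨ y r = q) ∧ (y s = p ∨ y s = q)

theorem keep_flip {p q r s : V} (hpq : p ≠ q) (hrs : r ≠ s) (hpr : p ≠ r) (hps : p ≠ s) (hqr : q ≠ r) (hqs : q ≠ s)
    {y h : Perm V} (hy : Keep p q r s y) (hh : Flip p q r s h) : h ≠ y ∧ ∀ u v, h ≠ y * swap u v := by
  obtain ⟨y1, y2, y3, y4⟩ := hy
  obtain ⟨h1, h2, h3, h4⟩ := hh
  have hp : h p ≠ y p := by
    intro e; rw [e] at h1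
    rcases y1 with y | y <;> rw [y] at h1 <;> tauto
  have hq : h q ≠ y q := by
    intro e; rw [e] at h2
    rcases y2 with y | y <;> rw [y] at h2 <;> tauto
  have hr : h r ≠ y r := by
    intro e; rw [e] at h3
    rcases y3 with y | y <;> rw [y] at h3 <;> rcases h3 with h | h <;> first | exact hpr h.symm | exact hqr h.symm | exact hps h.symm | exact hqs h.symm
  refine ⟨fun e => hp (by rw [e]), fun u v e => ?_⟩
  have key : ∀ z, h z ≠ y z → z = u ∨ z = v := by
    intro z hz
    by_contra hc
    push Not at hc
    apply hz
    rw [e, Perm.mul_apply, swap_apply_of_ne_of_ne hc.1 hc.2]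
  rcases key p hp with a | a <;> rcases key q hq with b | b <;> rcases key r hr with c | c <;> subst_vars <;> tauto
end tri

section main
variable {n : ℕ} {T : Set (Perm (Fin n))}

theorem trans_adj {i j : Fin n} : (transGraph T).Adj i j ↔ i ≠ j ∧ swap i j ∈ T := by
  rw [transGraph, SimpleGraph.fromRel_adj, swap_comm j i, or_self]

open Classical in
theorem mem_ES_T (hT : IsTranspositionSet T) {t : Perm (Fin n)} : t ∈ ES (transGraph T) univ ↔ t ∈ T := by
  rw [mem_ES]
  constructor
  · rintro ⟨a, -, b, -, h, rfl⟩; exact (trans_adj.1 h).2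
  · intro ht
    obtain ⟨i, j, hij, rfl⟩ := hT t ht
    exact ⟨i, mem_univ _, j, mem_univ _, trans_adj.2 ⟨hij, ht⟩, rfl⟩

open Classical in
theorem cay_adj (hT : IsTranspositionSet T) {g h : Perm (Fin n)} : (cayley T).Adj g h ↔ ∃ t ∈ ES (transGraph T) univ, h = g * t := by
  rw [cayley, SimpleGraph.fromRel_adj]
  constructor
  · rintro ⟨-, h1 | h1⟩
    · exact ⟨_, (mem_ES_T hT).2 h1, by simp⟩
    · have h2 := ES_sq ((mem_ES_T hT).2 h1)
      refine ⟨_, (mem_ES_T hT).2 h1, ?_⟩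
      have : g = h * (h⁻¹ * g) := by simp
      calc h = h * ((h⁻¹ * g) * (h⁻¹ * g)) := by rw [h2, mul_one]
        _ = g * (h⁻¹ * g) := by rw [← mul_assoc, ← this]
  · rintro ⟨t, ht, rfl⟩
    refine ⟨?_, Or.inl (by simpa using (mem_ES_T hT).1 ht)⟩
    intro e
    have h1 : t = 1 := by simpa using e.symm
    have := ES_sign ht
    rw [h1] at this
    simp at this

theorem cay_sign (hT : IsTranspositionSet T) {g h : Perm (Fin n)} (hgh : (cayley T).Adj g h) : Perm.sign h = - Perm.sign g := by
  classical
  obtain ⟨t, ht, rfl⟩ := (cay_adj hT).1 hgh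
  rw [map_mul, ES_sign ht, mul_neg_one]

/-- a cycle gives two vertices of each sign -/
theorem cycle_sign (hT : IsTranspositionSet T) {F : Set (Perm (Fin n))} {v : (Fᶜ : Set (Perm (Fin n)))}
    (p : ((cayley T).induce Fᶜ).Walk v v) (hp : p.IsCycle) (W : Finset (Perm (Fin n)))
    (hW : ∀ x : (Fᶜ : Set (Perm (Fin n))), ((cayley T).induce Fᶜ).Reachable v x → (x : Perm (Fin n)) ∈ W) (e : ℤˣ) :
    2 ≤ (W.filter fun h => Perm.sign h = e).card := by
  have h3 := hp.three_le_length
  have hm : ∀ i, (p.getVert i : Perm (Fin n)) ∈ W := fun i => hW _ (p.take i).reachable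
  have hs : ∀ i, i < p.length → Perm.sign (p.getVert (i+1) : Perm (Fin n)) = - Perm.sign (p.getVert i : Perm (Fin n)) := by
    intro i hi
    have := p.adj_getVert_succ hi
    exact cay_sign hT this
  have hinj := hp.getVert_injOn'
  have d1 : (p.getVert 0 : Perm (Fin n)) ≠ p.getVert 2 := by
    intro e
    have := hinj (by simp) (by simp; omega) (Subtype.ext e)
    omega
  have d2 : (p.getVert 1 : Perm (Fin n)) ≠ p.getVert (p.length - 1) := by
    intro e
    have := hinj (by simp; omega) (by simp) (Subtype.ext e)
    omega
  have s1 := hs 0 (by omega)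
  have s2 := hs 1 (by omega)
  have s3 := hs (p.length - 1) (by omega)
  rw [show p.length - 1 + 1 = p.length by omega, p.getVert_length] at s3
  rw [p.getVert_zero] at s1 d1
  norm_num at s1 s2
  rw [s1, neg_neg] at s2
  have s4 : Perm.sign (p.getVert (p.length - 1) : Perm (Fin n)) = - Perm.sign (v : Perm (Fin n)) := by rw [s3, neg_neg]
  have hv : (v : Perm (Fin n)) ∈ W := hW v (SimpleGraph.Reachable.refl _)
  have he : Perm.sign (v : Perm (Fin n)) = e ∨ - Perm.sign (v : Perm (Fin n)) = e := by
    rcases Int.units_eq_one_or e with h1 | h1 <;> rcases Int.units_eq_one_or (Perm.sign (v : Perm (Fin n))) with h2 | h2 <;> rw [h1, h2] <;> decide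
  have : 1 < (W.filter fun h => Perm.sign h = e).card := by
    rcases he with he | he
    · exact one_lt_card.2 ⟨_, mem_filter.2 ⟨hv, he⟩, _, mem_filter.2 ⟨hm 2, s2.trans he⟩, d1⟩
    · exact one_lt_card.2 ⟨_, mem_filter.2 ⟨hm 1, s1.trans he⟩, _, mem_filter.2 ⟨hm (p.length - 1), s4.trans he⟩, d2⟩
  omega

theorem lower_cut (hT : IsTranspositionSet T) (huni : IsUnicyclic (transGraph T))
    (htri : (transGraph T).CliqueFree 3) {F : Set (Perm (Fin n))} (hF : CyclicCut (cayley T) F) : 4 * n - 8 ≤ F.ncard := by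
  classical
  obtain ⟨-, C₁, C₂, hC, ⟨v₁, hv₁, p₁, hp₁⟩, ⟨v₂, hv₂, p₂, hp₂⟩⟩ := hF
  have ht := tri_of_cliqueFree htri
  have hU := uniX_univ huni.1 huni.2
  set A : Finset (Perm (Fin n)) := univ.filter fun g => ∃ h : g ∈ Fᶜ, ((cayley T).induce Fᶜ).connectedComponentMk ⟨g, h⟩ = C₁ with hA
  set B : Finset (Perm (Fin n)) := univ.filter fun g => ∃ h : g ∈ Fᶜ, ((cayley T).induce Fᶜ).connectedComponentMk ⟨g, h⟩ ≠ C₁ with hB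
  have hd : Disjoint A B := by
    rw [disjoint_left]
    intro g hg hg'
    rw [hA, mem_filter] at hg
    rw [hB, mem_filter] at hg'
    obtain ⟨-, h, e⟩ := hg
    obtain ⟨-, h', e'⟩ := hg'
    exact e' e
  have hne : ∀ a ∈ A, ∀ t ∈ ES (transGraph T) univ, a * t ∉ B := by
    intro a ha t ht' hb
    rw [hA, mem_filter] at ha
    rw [hB, mem_filter] at hb
    obtain ⟨-, h, e⟩ := ha
    obtain ⟨-, h', e'⟩ := hb
    apply e'
    rw [← e]
    apply SimpleGraph.ConnectedComponent.sound
    apply SimpleGraph.Adj.reachable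
    have : (cayley T).Adj a (a * t) := (cay_adj hT).2 ⟨t, ht', rfl⟩
    exact this.symm
  have key := lower ht hU hd hne
    (cycle_sign hT p₁ hp₁ A (fun x hx => by
      rw [hA, mem_filter]
      exact ⟨mem_univ _, x.2, by rw [← hv₁]; exact SimpleGraph.ConnectedComponent.sound hx.symm⟩))
    (cycle_sign hT p₂ hp₂ B (fun x hx => by
      rw [hB, mem_filter]
      refine ⟨mem_univ _, x.2, ?_⟩
      have : ((cayley T).induce Fᶜ).connectedComponentMk x = C₂ := by rw [← hv₂]; exact SimpleGraph.ConnectedComponent.sound hx.symm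
      intro e
      exact hC (e.symm.trans this)))
  rw [Fintype.card_fin] at key
  refine key.trans ?_
  rw [← Set.ncard_coe_finset]
  apply Set.ncard_le_ncard _ (Set.toFinite _)
  intro g hg
  by_contra hgF
  rw [mem_coe, mem_sdiff, mem_union, not_or, hA, hB, mem_filter, mem_filter] at hg
  by_cases hc : ((cayley T).induce Fᶜ).connectedComponentMk ⟨g, hgF⟩ = C₁
  · exact hg.2.1 ⟨mem_univ _, hgF, hc⟩
  · exact hg.2.2 ⟨mem_univ _, hgF, hc⟩

/-- four-cycles -/
theorem four_cycle {W : Type*} {H : SimpleGraph W} {a b c d : W} (h1 : H.Adj a b) (h2 : H.Adj b c) (h3 : H.Adj c d) (h4 : H.Adj d a)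
    (hac : a ≠ c) (hbd : b ≠ d) : ∃ p : H.Walk a a, p.IsCycle := by
  refine ⟨SimpleGraph.Walk.cons h1 (.cons h2 (.cons h3 (.cons h4 .nil))), ?_⟩
  rw [SimpleGraph.Walk.cons_isCycle_iff]
  have n1 := h1.ne
  have n2 := h2.ne
  have n3 := h3.ne
  have n4 := h4.ne
  constructor
  · simp only [SimpleGraph.Walk.cons_isPath_iff, SimpleGraph.Walk.support_cons, SimpleGraph.Walk.support_nil, List.mem_cons, List.not_mem_nil, SimpleGraph.Walk.isPath_iff_eq_nil]
    grind
  · simp only [SimpleGraph.Walk.edges_cons, SimpleGraph.Walk.edges_nil, List.mem_cons, List.not_mem_nil, Sym2.eq_iff]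
    grind

theorem upper_cut (hT : IsTranspositionSet T) (huni : IsUnicyclic (transGraph T))
    (htri : (transGraph T).CliqueFree 3) : ∃ F : Set (Perm (Fin n)), F.ncard ≤ 4 * (n - 2) ∧ CyclicCut (cayley T) F := by
  classical
  have ht := tri_of_cliqueFree htri
  have hU := uniX_univ huni.1 huni.2
  have hcard := hU.card
  rw [card_univ, Fintype.card_fin] at hcard
  obtain ⟨p, q, r, s, hpq, hrs, hpr, hps, hqr, hqs⟩ := hU.two_edges ht
  have npq := hpq.ne
  have nrs := hrs.ne
  have haE : swap p q ∈ ES (transGraph T) univ := mem_ES.2 ⟨p, mem_univ _, q, mem_univ _, hpq, rfl⟩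
  have hbE : swap r s ∈ ES (transGraph T) univ := mem_ES.2 ⟨r, mem_univ _, s, mem_univ _, hrs, rfl⟩
  have hab : swap p q ≠ swap r s := by
    intro e
    have := congrArg (fun f : Perm (Fin n) => f p) e
    simp only [swap_apply_left, swap_apply_of_ne_of_ne hpr hps] at this
    exact npq this.symm
  have hcomm : swap r s * swap p q = swap p q * swap r s := by
    ext z
    simp only [Perm.mul_apply, swap_apply_def]
    grind
  set a := swap p q with ha
  set b := swap r s with hb
  have haa : a * a = 1 := ES_sq haE
  have hbb : b * b = 1 := ES_sq hbE
  have ha1 : a ≠ 1 := by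
    intro e
    have := congrArg (fun f : Perm (Fin n) => f p) e
    simp only [ha, swap_apply_left, Perm.one_apply] at this
    exact npq this.symm
  have hab1 : a * b ≠ 1 := by
    intro e
    apply hab
    calc a = a * (b * b) := by rw [hbb, mul_one]
      _ = b := by rw [← mul_assoc, e, one_mul]
  set R : Finset (Perm (Fin n)) := {1, a, a * b, b} with hR
  set g : Perm (Fin n) := swap p r * swap q s with hg
  have hRa : ∀ x ∈ R, x * a ∈ R := by
    intro x hx
    simp only [hR, mem_insert, mem_singleton] at hx ⊢
    rcases hx with rfl | rfl | rfl | rfl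
    · simp
    · simp [haa]
    · right; right; right; rw [mul_assoc, hcomm, ← mul_assoc, haa, one_mul]
    · right; right; left; exact hcomm
  have hRb : ∀ x ∈ R, x * b ∈ R := by
    intro x hx
    simp only [hR, mem_insert, mem_singleton] at hx ⊢
    rcases hx with rfl | rfl | rfl | rfl
    · simp
    · simp
    · right; left; rw [mul_assoc, hbb, mul_one]
    · left; exact hbb
  have hKeep : ∀ x ∈ R, Keep p q r s x := by
    intro x hx
    simp only [hR, mem_insert, mem_singleton] at hx
    rcases hx with rfl | rfl | rfl | rfl <;> simp only [Keep, ha, hb, Perm.mul_apply, Perm.one_apply, swap_apply_def] <;> grind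
  have hFlip : ∀ x ∈ R, Flip p q r s (g * x) := by
    intro x hx
    simp only [hR, mem_insert, mem_singleton] at hx
    rcases hx with rfl | rfl | rfl | rfl <;> simp only [Flip, ha, hb, hg, Perm.mul_apply, Perm.one_apply, swap_apply_def] <;> grind
  have m1 : (1 : Perm (Fin n)) ∈ R := by simp [hR]
  have m2 : a ∈ R := by simp [hR]
  have m3 : a * b ∈ R := by simp [hR]
  have m4 : b ∈ R := by simp [hR]
  have hRF : ∀ x ∈ R, x ∈ ((nb (transGraph T) univ R : Finset _) : Set (Perm (Fin n)))ᶜ := by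
    intro x hx hx'
    exact (mem_nb.1 (mem_coe.1 hx')).2 hx
  have hgR : ∀ x ∈ R, g * x ∉ R := fun x hx hx' => (keep_flip npq nrs hpr hps hqr hqs (hKeep _ hx') (hFlip x hx)).1 rfl
  have hgF : ∀ x ∈ R, g * x ∈ ((nb (transGraph T) univ R : Finset _) : Set (Perm (Fin n)))ᶜ := by
    intro x hx hx'
    obtain ⟨⟨y, hy, t, ht', e⟩, -⟩ := mem_nb.1 (mem_coe.1 hx')
    obtain ⟨u, -, v, -, -, rfl⟩ := mem_ES.1 ht'
    exact (keep_flip npq nrs hpr hps hqr hqs (hKeep _ hy) (hFlip x hx)).2 u v e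
  refine ⟨((nb (transGraph T) univ R : Finset _) : Set (Perm (Fin n))), ?_, ?_⟩
  · rw [Set.ncard_coe_finset]
    have hsub : nb (transGraph T) univ R ⊆ (R ×ˢ (((ES (transGraph T) univ).erase a).erase b)).image fun z => z.1 * z.2 := by
      intro z hz
      obtain ⟨⟨y, hy, t, ht', rfl⟩, hz2⟩ := mem_nb.1 hz
      refine mem_image.2 ⟨(y, t), mem_product.2 ⟨hy, ?_⟩, rfl⟩
      rw [mem_erase, mem_erase]
      refine ⟨?_, ?_, ht'⟩
      · rintro rfl; exact hz2 (hRb y hy)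
      · rintro rfl; exact hz2 (hRa y hy)
    refine (card_le_card hsub).trans (card_image_le.trans ?_)
    rw [card_product, card_erase_of_mem (mem_erase.2 ⟨hab.symm, hbE⟩), card_erase_of_mem haE, hcard]
    have hR4 : R.card ≤ 4 := card_le_four
    rw [Nat.sub_sub]
    exact Nat.mul_le_mul_right _ hR4
  · set H := (cayley T).induce ((nb (transGraph T) univ R : Finset _) : Set (Perm (Fin n)))ᶜ with hH
    have cyc : ∀ h : Perm (Fin n), (k1 : h * 1 ∈ (((nb (transGraph T) univ R : Finset _) : Set (Perm (Fin n)))ᶜ : Set _)) → (k2 : h * a ∈ (((nb (transGraph T) univ R : Finset _) : Set (Perm (Fin n)))ᶜ : Set _)) → (k3 : h * (a * b) ∈ (((nb (transGraph T) univ R : Finset _) : Set (Perm (Fin n)))ᶜ : Set _)) → (k4 : h * b ∈ (((nb (transGraph T) univ R : Finset _) : Set (Perm (Fin n)))ᶜ : Set _)) →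
        ∃ p : H.Walk ⟨h * 1, k1⟩ ⟨h * 1, k1⟩, p.IsCycle := by
      intro h k1 k2 k3 k4
      refine four_cycle (b := ⟨h * a, k2⟩) (c := ⟨h * (a * b), k3⟩) (d := ⟨h * b, k4⟩) ?_ ?_ ?_ ?_ ?_ ?_
      · exact (cay_adj hT).2 ⟨a, haE, by simp⟩
      · exact (cay_adj hT).2 ⟨b, hbE, by simp [mul_assoc]⟩
      · exact (cay_adj hT).2 ⟨a, haE, by show h * b = h * (a * b) * a; rw [mul_assoc h, mul_assoc a b, hcomm, ← mul_assoc a a b, haa, one_mul]⟩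
      · exact (cay_adj hT).2 ⟨b, hbE, by show h * 1 = h * b * b; rw [mul_assoc, hbb]⟩
      · intro e
        exact hab1 (mul_left_cancel (congrArg Subtype.val e)).symm
      · intro e
        exact hab (mul_left_cancel (congrArg Subtype.val e))
    have hnr : ∀ k k', ¬ H.Reachable ⟨1 * 1, k⟩ ⟨g * 1, k'⟩ := by
      rintro k k' ⟨w⟩
      obtain ⟨d, -, h1, h2⟩ := w.exists_boundary_dart {x | (x : Perm (Fin n)) ∈ R} (by simpa using m1) (by
        have := hgR 1 m1
        exact this)
      have hadj : (cayley T).Adj d.fst d.snd := d.adj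
      obtain ⟨t, ht', e⟩ := (cay_adj hT).1 hadj
      exact d.snd.2 (mem_coe.2 (mem_nb.2 ⟨⟨_, h1, t, ht', e⟩, h2⟩))
    have hRF' : ∀ x ∈ R, 1 * x ∈ ((nb (transGraph T) univ R : Finset _) : Set (Perm (Fin n)))ᶜ := by
      intro x hx; rw [one_mul]; exact hRF x hx
    refine ⟨fun hpre => hnr (hRF' 1 m1) (hgF 1 m1) (hpre _ _), H.connectedComponentMk ⟨1 * 1, hRF' 1 m1⟩, H.connectedComponentMk ⟨g * 1, hgF 1 m1⟩, ?_, ?_, ?_⟩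
    · intro e
      exact hnr _ _ (SimpleGraph.ConnectedComponent.exact e)
    · exact ⟨_, rfl, cyc 1 (hRF' _ m1) (hRF' _ m2) (hRF' _ m3) (hRF' _ m4)⟩
    · exact ⟨_, rfl, cyc g (hgF _ m1) (hgF _ m2) (hgF _ m3) (hgF _ m4)⟩

end main
end UG

theorem stmt_19 {n : ℕ} (hn : 4 ≤ n) (T : Set (Equiv.Perm (Fin n)))
    (hT : IsTranspositionSet T) (huni : IsUnicyclic (transGraph T))
    (htri : (transGraph T).CliqueFree 3) :
    IsLeast {k : ℕ | ∃ F : Set (Equiv.Perm (Fin n)),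
      F.ncard = k ∧ CyclicCut (cayley T) F} (4 * n - 8) := by
  refine ⟨?_, ?_⟩
  · obtain ⟨F, hF1, hF2⟩ := UG.upper_cut hT huni htri
    have := UG.lower_cut hT huni htri hF2
    exact ⟨F, by omega, hF2⟩
  · rintro k ⟨F, rfl, hF⟩
    exact UG.lower_cut hT huni htri hF
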